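/- arXiv:2312.14116 — 2 statements merged into one kernel-verified Lean document; each statement's English description precedes it below -/
import Mathlib

section
/- Let K be a field, f_1,…,f_t ∈ K[x,y] (t ≥ 2) of y-degree at most d_y generating a zero-dimensional ideal, let k be a positive integer, A = K[x]/⟨x^k⟩, and let D ≥ max(1, Δ(f_1,…,f_t,x^k)). Let B ∈ A^{(d_y+D)×tD} be the Howell normal form of S mod x^k, where S is the extended Sylvester matrix of (f_1,…,f_t) in degree D, and let B_lift ∈ K[x]^{(d_y+D)×tD} be its canonical lift. Let h_1,…,h_L be the nonzero columns of B_lift, let r be the row index of the first nonzero entry of h_L, set L″ = L + d_y + D − r, and for i = L+1,…,L″ let h_i ∈ K[x]^{d_y+D} be the column vector with entry x^k at index r+i−L and zeros elsewhere. Then there exists L′ ≤ L such that π_{d_y+D}^{-1}(h_{L′}) is monic in y, and, taking L′ to be the largest such index, the sequence π_{d_y+D}^{-1}(h_{L″}), …, π_{d_y+D}^{-1}(h_{L′}) equals the detaching basis of the ideal ⟨f_1,…,f_t,x^k⟩ in degree equal to the largest y-degree of its reduced minimal lexicographic Gröbner basis. -/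
noncomputable section

open Polynomial

/-- Bivariate polynomials `k[x][y]`: the inner `X` is `x`, the outer `X` is `y`. -/
abbrev Biv (k : Type*) [CommRing k] : Type _ := Polynomial (Polynomial k)

variable {k : Type*} [CommRing k]

/-- The leading monomial of `f`, as the pair (y-exponent, x-exponent), for the
lexicographic order induced by `x ≺ y`. -/
def lmon (f : Biv k) : ℕ × ℕ := (f.natDegree, f.leadingCoeff.natDegree)

/-- Divisibility of monomials: `x^{p.2} y^{p.1}` divides `x^{q.2} y^{q.1}`. -/
def monDvd (p q : ℕ × ℕ) : Prop := p.1 ≤ q.1 ∧ p.2 ≤ q.2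

/-- Lexicographic comparison of monomials, `y`-exponent first. -/
def monLt (p q : ℕ × ℕ) : Prop := p.1 < q.1 ∨ (p.1 = q.1 ∧ p.2 < q.2)

/-- The monomial `x^{m.2} y^{m.1}` occurs in `f` (has a nonzero coefficient). -/
def occursIn (f : Biv k) (m : ℕ × ℕ) : Prop := (f.coeff m.1).coeff m.2 ≠ 0

/-- `G` is a Gröbner basis of `I` for the lexicographic order with `x ≺ y`:
its elements are nonzero elements of `I`, and the leading monomial of any nonzero
element of `I` is divisible by the leading monomial of some element of `G`. -/
def IsGB (G : List (Biv k)) (I : Ideal (Biv k)) : Prop :=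
  (∀ g ∈ G, g ≠ 0 ∧ g ∈ I) ∧
  ∀ f ∈ I, f ≠ 0 → ∃ g ∈ G, monDvd (lmon g) (lmon f)

/-- `f` is monic w.r.t. lex `x ≺ y`: the coefficient of its leading monomial is `1`. -/
def lexMonic (f : Biv k) : Prop := f.leadingCoeff.Monic

/-- `g 0, …, g s` is the reduced minimal lexicographic Gröbner basis of `I`,
listed in decreasing order of leading monomials. -/
def IsReducedGB {s : ℕ} (g : Fin (s + 1) → Biv k) (I : Ideal (Biv k)) : Prop :=
  IsGB (List.ofFn g) I ∧
  (∀ j, lexMonic (g j)) ∧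
  (∀ j l, j ≠ l → ∀ m : ℕ × ℕ, occursIn (g j) m → ¬ monDvd (lmon (g l)) m) ∧
  (∀ j l : Fin (s + 1), j < l → monLt (lmon (g l)) (lmon (g j)))

/-- Every monomial of `f` of `y`-degree `< i` is reduced w.r.t. the family `g`. -/
def reducedBelow {s : ℕ} (g : Fin (s + 1) → Biv k) (i : ℕ) (f : Biv k) : Prop :=
  ∀ m : ℕ × ℕ, m.1 < i → occursIn f m → ∀ j, ¬ monDvd (lmon (g j)) m

/-- `A` is the detaching sequence associated to the reduced Gröbner basis `g` of `I`:
`A i = 0` for `i < n_s`, `A (n_j) = g j`, and otherwise `A i` is obtained from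
`y * A (i-1)` by reducing the terms of `y`-degree `< i` modulo `g`
(so `A i - y * A (i-1)` lies in `I` and has `y`-degree `< i`, and the part of `A i`
of `y`-degree `< i` is reduced w.r.t. `g`). -/
def IsDetachingSeq {s : ℕ} (g : Fin (s + 1) → Biv k) (I : Ideal (Biv k))
    (A : ℕ → Biv k) : Prop :=
  (∀ i, i < (g (Fin.last s)).natDegree → A i = 0) ∧
  (∀ j, A ((g j).natDegree) = g j) ∧
  (∀ i, (g (Fin.last s)).natDegree ≤ i → (∀ j, (g j).natDegree ≠ i) →
    (A i - Polynomial.X * A (i - 1)) ∈ I ∧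
    (A i - Polynomial.X * A (i - 1)).degree < (i : WithBot ℕ) ∧
    reducedBelow g i (A i))

/-- The inverse of the `K[x]`-module isomorphism `π_n`: it sends the vector
`[f_{n-1}, …, f_1, f_0]ᵀ` to the polynomial `f_0 + f_1 y + … + f_{n-1} y^{n-1}`. -/
def invPi {k : Type*} [CommRing k] {n : ℕ} (v : Fin n → Polynomial k) : Biv k :=
  ∑ i : Fin n, Polynomial.C (v i) * Polynomial.X ^ (n - 1 - (i : ℕ))

/-- The extended Sylvester matrix of `(f_1, …, f_t)` in degree `D`: the block matrix
`[S_1 … S_t]`, where `S_i` is the matrix, in the bases given by `π_D` and `π_{d_y+D}`,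
of the map `w ↦ w * f_i` from polynomials of `y`-degree `< D` to polynomials of
`y`-degree `< d_y + D`. Column `c` belongs to block `c / D` and represents
`y^{D - 1 - (c % D)} * f_{c/D}`; row `r` corresponds to the coefficient of
`y^{d_y + D - 1 - r}`. -/
def sylvester {k : Type*} [CommRing k] {t : ℕ} (f : Fin t → Biv k) (dy D : ℕ) :
    Matrix (Fin (dy + D)) (Fin (t * D)) (Polynomial k) :=
  fun r c =>
    if h : (c : ℕ) / D < t then
      (Polynomial.X ^ (D - 1 - (c : ℕ) % D) * f ⟨(c : ℕ) / D, h⟩).coeff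
        (dy + D - 1 - (r : ℕ))
    else 0

/-- Column `c` of the matrix `H` is nonzero. -/
def colNZ {α : Type*} [Zero α] {n m : ℕ} (H : Matrix (Fin n) (Fin m) α)
    (c : Fin m) : Prop :=
  ∃ r, H r c ≠ 0

/-- `H` is a (column-style, lower triangular) Hermite normal form of `M` over `K[x]`:
`H = M U` for an invertible `U`; the nonzero columns of `H` come first; the row indices
of the pivots (first nonzero entries of the nonzero columns) are strictly increasing;
the pivots are monic; and in each pivot row the entries in earlier columns have
`x`-degree strictly smaller than that of the pivot. -/
def IsHermiteForm {K : Type*} [Field K] {n m : ℕ}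
    (M H : Matrix (Fin n) (Fin m) (Polynomial K)) : Prop :=
  (∃ U : Matrix (Fin m) (Fin m) (Polynomial K), IsUnit U.det ∧ H = M * U) ∧
  (∀ c c' : Fin m, c ≤ c' → colNZ H c' → colNZ H c) ∧
  ∃ piv : Fin m → Fin n,
    (∀ c, colNZ H c →
      H (piv c) c ≠ 0 ∧ (∀ r, r < piv c → H r c = 0) ∧ (H (piv c) c).Monic) ∧
    (∀ c c', c < c' → colNZ H c' → piv c < piv c') ∧
    (∀ c c', c' < c → colNZ H c → (H (piv c) c').degree < (H (piv c) c).degree)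

/-- `H` is the Howell normal form of `M` over `A = K[x]/⟨x^k⟩` (column operations):
`H = M U` for an invertible `U`; the nonzero columns of `H` come first; the row indices
of the pivots (first nonzero entries of the nonzero columns) are strictly increasing;
each pivot is (the class of) a power of `x`; for each pivot, the entries of the pivot
row lying in earlier columns have canonical lifts of `x`-degree strictly smaller than
the exponent of the pivot; and every `A`-linear combination of the columns whose
entries vanish up to (and including) the pivot row of a nonzero column `c0` is an
`A`-linear combination of the columns of index `> c0`. -/
def IsHowellForm {K : Type*} [Field K] {n m : ℕ} (k : ℕ)
    (M H : Matrix (Fin n) (Fin m)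
      (Polynomial K ⧸ Ideal.span {(Polynomial.X : Polynomial K) ^ k})) : Prop :=
  (∃ U, IsUnit U.det ∧ H = M * U) ∧
  (∀ c c' : Fin m, c ≤ c' → colNZ H c' → colNZ H c) ∧
  ∃ (piv : Fin m → Fin n) (pexp : Fin m → ℕ),
    (∀ c, colNZ H c →
      H (piv c) c ≠ 0 ∧ (∀ r, r < piv c → H r c = 0) ∧
      H (piv c) c =
        Ideal.Quotient.mk (Ideal.span {(Polynomial.X : Polynomial K) ^ k})
          (Polynomial.X ^ pexp c)) ∧
    (∀ c c', c < c' → colNZ H c' → piv c < piv c') ∧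
    (∀ c c', c' < c → colNZ H c →
      ∃ u : Polynomial K,
        Ideal.Quotient.mk (Ideal.span {(Polynomial.X : Polynomial K) ^ k}) u =
          H (piv c) c' ∧
        u.degree < (pexp c : WithBot ℕ)) ∧
    (∀ c0, colNZ H c0 →
      ∀ v : Fin m → Polynomial K ⧸ Ideal.span {(Polynomial.X : Polynomial K) ^ k},
        (∀ r : Fin n, (r : ℕ) ≤ (piv c0 : ℕ) → H.mulVec v r = 0) →
        ∃ v', H.mulVec v' = H.mulVec v ∧ ∀ c : Fin m, (c : ℕ) ≤ (c0 : ℕ) → v' c = 0)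

/-- The extended family of columns `h_1, …, h_{L''}` of the paper (1-indexed): for
`1 ≤ i ≤ L`, `h_i` is column `i - 1` of `B`; for `i > L`, `h_i` is the vector with
`x^k` at (1-based) index `r + i - L` and zeros elsewhere. The value returned is
`π⁻¹(h_i) ∈ K[x][y]`. -/
def extSeq {K : Type*} [Field K] {n m : ℕ}
    (B : Matrix (Fin n) (Fin m) (Polynomial K)) (L r k : ℕ) (i : ℕ) : Biv K :=
  if h : i ≤ L ∧ i - 1 < m then invPi (fun rr => B rr ⟨i - 1, h.2⟩)
  else invPi (fun rr : Fin n =>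
    if (rr : ℕ) + 1 = r + i - L then Polynomial.X ^ k else 0)

/-!
The detaching sequence `A` of `J = ⟨f, x^k⟩` is a Hermite normal form of `J`, viewed as a
`K[x]`-module filtered by the degree in `y`: each `A i` has a monic leading coefficient of least
possible `x`-degree, its other coefficients are reduced modulo the leading coefficients below, and
these properties determine `A i`.

Completing the columns of the lifted Howell form by `x^k e_ρ` at the rows `ρ` without a pivot gives
the Hermite normal form of the module generated by the columns of the Sylvester matrix and
`x^k K[x]^n`. This module embeds in `J`, and by the choice of `D` it contains `A i` for all `i` up
to the `y`-degree `N` of the first basis element. So up to degree `N` both forms have the same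
pivots, and the uniqueness of `A i` identifies them.

The leading coefficient of `A i` has nonincreasing `x`-degree in `i`, and a row carries a Howell
pivot exactly when this degree is less than `k`. Hence the pivot rows from degree `N` downwards are
consecutive, which matches the column indices with the degrees.
-/

section HermiteSequences

variable {R : Type*} [CommRing R] {J : Ideal (Biv R)}

/-- `A` is a Hermite sequence of the ideal `J` of `R[x][y]`: a `y`-triangular family in `J` whose
leading coefficients in `y` are monic of the least possible `x`-degree, and whose lower
coefficients are reduced modulo these leading coefficients. As for a detaching sequence, `A i = 0`
when no element of `J` has `y`-degree `i`. -/
structure IsHermiteSeq (J : Ideal (Biv R)) (A : ℕ → Biv R) : Prop where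
  mem (i : ℕ) : A i ∈ J
  natDegree_eq {i : ℕ} (hi : A i ≠ 0) : (A i).natDegree = i
  lexMonic {i : ℕ} (hi : A i ≠ 0) : lexMonic (A i)
  ne_zero {i : ℕ} {f : Biv R} (hf : f ∈ J) (hd : f.natDegree ≤ i) (hc : f.coeff i ≠ 0) : A i ≠ 0
  degree_le {i : ℕ} {f : Biv R} (hf : f ∈ J) (hd : f.natDegree ≤ i) (hc : f.coeff i ≠ 0) :
    (A i).leadingCoeff.degree ≤ (f.coeff i).degree
  degree_coeff_lt {l i : ℕ} (hl : A l ≠ 0) (hli : l < i) :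
    ((A i).coeff l).degree < (A l).leadingCoeff.degree

namespace IsHermiteSeq

variable {A : ℕ → Biv R}

theorem coeff_self (hA : IsHermiteSeq J A) {i : ℕ} (hi : A i ≠ 0) :
    (A i).coeff i = (A i).leadingCoeff := by
  rw [leadingCoeff, hA.natDegree_eq hi]

theorem degree_leadingCoeff_anti (hA : IsHermiteSeq J A) {i j : ℕ} (hi : A i ≠ 0) (hij : i ≤ j) :
    (A j).leadingCoeff.degree ≤ (A i).leadingCoeff.degree := by
  nontriviality R
  have hcoeff : (X ^ (j - i) * A i).coeff j = (A i).leadingCoeff := by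
    rw [← hA.coeff_self hi, coeff_X_pow_mul', if_pos (Nat.sub_le j i), Nat.sub_sub_self hij]
  have hdeg : (X ^ (j - i) * A i).natDegree ≤ j := by
    rw [natDegree_X_pow_mul _ hi, hA.natDegree_eq hi]
    omega
  have hle := hA.degree_le (J.mul_mem_left _ (hA.mem i)) hdeg
    (by rwa [hcoeff, Ne, leadingCoeff_eq_zero])
  rwa [hcoeff] at hle

theorem eq_of_reduced (hA : IsHermiteSeq J A) {i : ℕ} {f : Biv R} (hf : f ∈ J)
    (hdeg : f.natDegree ≤ i) (hmonic : (f.coeff i).Monic)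
    (hle : (f.coeff i).degree ≤ (A i).leadingCoeff.degree)
    (hred : ∀ l < i, A l ≠ 0 → (f.coeff l).degree < (A l).leadingCoeff.degree) : f = A i := by
  nontriviality R
  have hAi : A i ≠ 0 := hA.ne_zero hf hdeg hmonic.ne_zero
  by_contra hne
  have hsub : f - A i ≠ 0 := sub_ne_zero.mpr hne
  obtain ⟨l, hl⟩ : ∃ l, l = (f - A i).natDegree := ⟨_, rfl⟩
  have hsubJ : f - A i ∈ J := J.sub_mem hf (hA.mem i)
  have hcoeff : (f - A i).coeff l ≠ 0 := by rwa [hl, coeff_natDegree, Ne, leadingCoeff_eq_zero]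
  have hAl : A l ≠ 0 := hA.ne_zero hsubJ hl.ge hcoeff
  refine (hA.degree_le hsubJ hl.ge hcoeff).not_gt ?_
  rw [coeff_sub]
  have hli : l ≤ i := hl ▸ (natDegree_sub_le _ _).trans (max_le hdeg (hA.natDegree_eq hAi).le)
  rcases hli.eq_or_lt with rfl | hlt
  · have hdegree : (f.coeff l).degree = (A l).leadingCoeff.degree :=
      hle.antisymm (hA.degree_le hf hdeg hmonic.ne_zero)
    rw [hA.coeff_self hAi, ← hdegree]
    exact degree_sub_lt_left hdegree hmonic.ne_zero
      (hmonic.leadingCoeff.trans (hA.lexMonic hAi).leadingCoeff.symm)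
  · exact (degree_sub_le _ _).trans_lt (max_lt (hred l hlt hAl) (hA.degree_coeff_lt hAl hlt))

end IsHermiteSeq

end HermiteSequences

section DetachingSequences

variable {R : Type*} [CommRing R] {J : Ideal (Biv R)} {σ : ℕ} {Γ : Fin (σ + 1) → Biv R}

theorem occursIn_lmon {f : Biv R} (hf : f ≠ 0) : occursIn f (lmon f) := by
  simpa only [occursIn, lmon, coeff_natDegree, Ne, leadingCoeff_eq_zero] using hf

theorem natDegree_leadingCoeff_of_degree_sub_X_mul_lt {p q : R[X]} {i : ℕ} (hq : q ≠ 0)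
    (hdeg : q.natDegree = i) (h : (p - X * q).degree < ((i + 1 : ℕ) : WithBot ℕ)) :
    p.natDegree = i + 1 ∧ p.leadingCoeff = q.leadingCoeff := by
  have : Nontrivial R := Polynomial.nontrivial_iff.mp ⟨q, 0, hq⟩
  have hdegX : (X * q).degree = ((i + 1 : ℕ) : WithBot ℕ) := by
    rw [X_mul, degree_mul_X, degree_eq_natDegree hq, hdeg, Nat.cast_succ]
  rw [← hdegX] at h
  constructor
  · rw [← sub_add_cancel p (X * q)]
    exact natDegree_eq_of_degree_eq_some ((degree_add_eq_right_of_degree_lt h).trans hdegX)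
  · rw [← sub_add_cancel p (X * q), leadingCoeff_add_of_degree_lt h, X_mul, leadingCoeff_mul_X]

namespace IsReducedGB

theorem mem (hΓ : IsReducedGB Γ J) (j : Fin (σ + 1)) : Γ j ∈ J :=
  (hΓ.1.1 _ (List.mem_ofFn.mpr ⟨j, rfl⟩)).2

theorem ne_zero (hΓ : IsReducedGB Γ J) (j : Fin (σ + 1)) : Γ j ≠ 0 :=
  (hΓ.1.1 _ (List.mem_ofFn.mpr ⟨j, rfl⟩)).1

theorem exists_monDvd (hΓ : IsReducedGB Γ J) {f : Biv R} (hf : f ∈ J) (hf0 : f ≠ 0) :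
    ∃ j, monDvd (lmon (Γ j)) (lmon f) := by
  obtain ⟨g, hg, hdvd⟩ := hΓ.1.2 f hf hf0
  obtain ⟨j, rfl⟩ := List.mem_ofFn.mp hg
  exact ⟨j, hdvd⟩

theorem eq_of_monDvd (hΓ : IsReducedGB Γ J) {j l : Fin (σ + 1)}
    (h : monDvd (lmon (Γ l)) (lmon (Γ j))) : l = j := by
  by_contra hne
  exact hΓ.2.2.1 j l (Ne.symm hne) _ (occursIn_lmon (hΓ.ne_zero j)) h

theorem natDegree_antitone (hΓ : IsReducedGB Γ J) : Antitone fun j => (Γ j).natDegree := by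
  intro j l hjl
  rcases hjl.eq_or_lt with rfl | hlt
  · exact le_rfl
  · rcases hΓ.2.2.2 j l hlt with h | h
    · exact h.le
    · exact h.1.le

theorem natDegree_leadingCoeff_le (hΓ : IsReducedGB Γ J) {j l : Fin (σ + 1)}
    (h : (Γ l).natDegree ≤ (Γ j).natDegree) :
    (Γ j).leadingCoeff.natDegree ≤ (Γ l).leadingCoeff.natDegree := by
  by_contra! hlt
  exact hlt.ne (by rw [hΓ.eq_of_monDvd ⟨h, hlt.le⟩])

theorem lmon_zero_monDvd_of_monic (hΓ : IsReducedGB Γ J) {f : Biv R} (hf : f ∈ J)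
    (hmonic : f.Monic) : monDvd (lmon (Γ 0)) (lmon f) := by
  have : Nontrivial R[X] := Polynomial.nontrivial_iff.mp ⟨Γ 0, 0, hΓ.ne_zero 0⟩
  obtain ⟨j, hdvd⟩ := hΓ.exists_monDvd hf hmonic.ne_zero
  have hj : (Γ j).leadingCoeff.natDegree = 0 := by
    simpa only [lmon, hmonic.leadingCoeff, natDegree_one, Nat.le_zero] using hdvd.2
  have hj0 : j = 0 :=
    hΓ.eq_of_monDvd ⟨hΓ.natDegree_antitone (Fin.zero_le j), hj.trans_le (Nat.zero_le _)⟩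
  exact hj0 ▸ hdvd

theorem monic_zero (hΓ : IsReducedGB Γ J) (h : ∃ f ∈ J, f.Monic) : (Γ 0).Monic := by
  obtain ⟨f, hf, hmonic⟩ := h
  refine eq_one_of_monic_natDegree_zero (hΓ.2.1 0) (Nat.le_zero.mp ?_)
  simpa only [lmon, hmonic.leadingCoeff, natDegree_one] using
    (hΓ.lmon_zero_monDvd_of_monic hf hmonic).2

end IsReducedGB

namespace IsDetachingSeq

variable {A : ℕ → Biv R}

theorem mem (hA : IsDetachingSeq Γ J A) (hΓ : IsReducedGB Γ J) (i : ℕ) : A i ∈ J := by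
  induction i with
  | zero =>
    rcases Nat.eq_zero_or_pos (Γ (Fin.last σ)).natDegree with h | h
    · rw [← h, hA.2.1]
      exact hΓ.mem _
    · exact hA.1 0 h ▸ J.zero_mem
  | succ i ih =>
    by_cases hlast : i + 1 < (Γ (Fin.last σ)).natDegree
    · exact hA.1 _ hlast ▸ J.zero_mem
    by_cases hΓi : ∃ j, (Γ j).natDegree = i + 1
    · obtain ⟨j, hj⟩ := hΓi
      rw [← hj, hA.2.1]
      exact hΓ.mem j
    · have hsub := (hA.2.2 (i + 1) (not_lt.mp hlast) (not_exists.mp hΓi)).1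
      simpa using J.add_mem hsub (J.mul_mem_left X ih)

-- The `j` produced here is the basis element of largest `y`-degree `≤ i`, from which `A i` is
-- obtained by successive multiplications by `y`.
theorem exists_leadingCoeff_eq (hA : IsDetachingSeq Γ J A) (hΓ : IsReducedGB Γ J) {i : ℕ}
    (hi : (Γ (Fin.last σ)).natDegree ≤ i) :
    A i ≠ 0 ∧ (A i).natDegree = i ∧ ∃ j, (A i).leadingCoeff = (Γ j).leadingCoeff ∧
      ∀ l, (Γ l).natDegree ≤ i → (Γ l).natDegree ≤ (Γ j).natDegree := by
  have at_basis (j) : A (Γ j).natDegree ≠ 0 ∧ (A (Γ j).natDegree).natDegree = (Γ j).natDegree ∧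
      ∃ l, (A (Γ j).natDegree).leadingCoeff = (Γ l).leadingCoeff ∧
        ∀ l', (Γ l').natDegree ≤ (Γ j).natDegree → (Γ l').natDegree ≤ (Γ l).natDegree := by
    rw [hA.2.1 j]
    exact ⟨hΓ.ne_zero j, rfl, j, rfl, fun _ h => h⟩
  induction i, hi using Nat.le_induction with
  | base => exact at_basis (Fin.last σ)
  | succ i hi ih =>
    by_cases hΓi : ∃ j, (Γ j).natDegree = i + 1
    · obtain ⟨j, hj⟩ := hΓi
      exact hj ▸ at_basis j
    · obtain ⟨hne, hdeg, j, hlead, hmax⟩ := ih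
      have hΓi := not_exists.mp hΓi
      obtain ⟨hdeg', hlead'⟩ := natDegree_leadingCoeff_of_degree_sub_X_mul_lt hne hdeg
        (hA.2.2 (i + 1) (by omega) hΓi).2.1
      exact ⟨ne_zero_of_natDegree_gt (i.succ_pos.trans_eq hdeg'.symm), hdeg', j, hlead'.trans hlead,
        fun l hl => hmax l (Nat.lt_succ_iff.mp (hl.lt_of_ne (hΓi l)))⟩

theorem last_natDegree_le (hA : IsDetachingSeq Γ J A) {i : ℕ} (hi : A i ≠ 0) :
    (Γ (Fin.last σ)).natDegree ≤ i :=
  not_lt.mp fun h => hi (hA.1 i h)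

theorem reducedBelow (hA : IsDetachingSeq Γ J A) (hΓ : IsReducedGB Γ J) (i : ℕ) :
    reducedBelow Γ i (A i) := by
  intro m hm hocc j hdvd
  have hi : A i ≠ 0 := fun h => hocc (by simp [h])
  by_cases hΓi : ∃ l, (Γ l).natDegree = i
  · obtain ⟨l, rfl⟩ := hΓi
    have hlj : l ≠ j := by
      rintro rfl
      exact hm.not_ge hdvd.1
    exact hΓ.2.2.1 l j hlj m (hA.2.1 l ▸ hocc) hdvd
  · exact (hA.2.2 i (hA.last_natDegree_le hi) (not_exists.mp hΓi)).2.2 m hm hocc j hdvd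

theorem ne_zero_and_degree_leadingCoeff_le (hA : IsDetachingSeq Γ J A) (hΓ : IsReducedGB Γ J)
    {f : Biv R} (hf : f ∈ J) (hf0 : f ≠ 0) :
    A f.natDegree ≠ 0 ∧ (A f.natDegree).leadingCoeff.degree ≤ f.leadingCoeff.degree := by
  obtain ⟨l, hldeg, hllead⟩ := hΓ.exists_monDvd hf hf0
  obtain ⟨hne, -, j, hlead, hmax⟩ := hA.exists_leadingCoeff_eq (i := f.natDegree) hΓ
    ((hΓ.natDegree_antitone (Fin.le_last l)).trans hldeg)
  refine ⟨hne, ?_⟩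
  rw [hlead, degree_eq_natDegree (leadingCoeff_ne_zero.mpr (hΓ.ne_zero j)),
    degree_eq_natDegree (leadingCoeff_ne_zero.mpr hf0), Nat.cast_le]
  exact (hΓ.natDegree_leadingCoeff_le (hmax l hldeg)).trans hllead

theorem degree_coeff_lt (hA : IsDetachingSeq Γ J A) (hΓ : IsReducedGB Γ J) {l i : ℕ}
    (hl : A l ≠ 0) (hli : l < i) : ((A i).coeff l).degree < (A l).leadingCoeff.degree := by
  rw [degree_eq_natDegree (leadingCoeff_ne_zero.mpr hl), degree_lt_iff_coeff_zero]
  intro q hq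
  by_contra hocc
  obtain ⟨j, hjdeg, hjlead⟩ := hΓ.exists_monDvd (hA.mem hΓ l) hl
  have hdeg : (A l).natDegree = l :=
    (hA.exists_leadingCoeff_eq hΓ (hA.last_natDegree_le hl)).2.1
  exact hA.reducedBelow hΓ i (l, q) hli hocc j ⟨hjdeg.trans hdeg.le, hjlead.trans hq⟩

theorem isHermiteSeq (hA : IsDetachingSeq Γ J A) (hΓ : IsReducedGB Γ J) : IsHermiteSeq J A where
  mem := hA.mem hΓ
  natDegree_eq hi := (hA.exists_leadingCoeff_eq hΓ (hA.last_natDegree_le hi)).2.1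
  lexMonic hi := by
    obtain ⟨-, -, j, hlead, -⟩ := hA.exists_leadingCoeff_eq hΓ (hA.last_natDegree_le hi)
    rw [lexMonic, hlead]
    exact hΓ.2.1 j
  ne_zero hf hd hc := by
    obtain rfl := natDegree_eq_of_le_of_coeff_ne_zero hd hc
    exact (hA.ne_zero_and_degree_leadingCoeff_le hΓ hf (leadingCoeff_ne_zero.mp hc)).1
  degree_le hf hd hc := by
    obtain rfl := natDegree_eq_of_le_of_coeff_ne_zero hd hc
    exact (hA.ne_zero_and_degree_leadingCoeff_le hΓ hf (leadingCoeff_ne_zero.mp hc)).2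
  degree_coeff_lt := hA.degree_coeff_lt hΓ

end IsDetachingSeq

end DetachingSequences

section PolynomialVectors

variable {R : Type*} [CommRing R] {n : ℕ}

theorem coeff_invPi (v : Fin n → R[X]) (i : Fin n) : (invPi v).coeff i = v i.rev := by
  simp only [invPi, finsetSum_coeff, coeff_C_mul, coeff_X_pow]
  rw [Finset.sum_eq_single i.rev]
  · rw [if_pos (by rw [Fin.val_rev]; omega), mul_one]
  · intro j _ hj
    rw [Ne, Fin.ext_iff, Fin.val_rev] at hj
    rw [if_neg (by omega), mul_zero]
  · exact fun h => absurd (Finset.mem_univ _) h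

theorem degree_invPi_lt (v : Fin n → R[X]) : (invPi v).degree < n := by
  rw [degree_lt_iff_coeff_zero]
  intro i hi
  simp only [invPi, finsetSum_coeff, coeff_C_mul, coeff_X_pow]
  exact Finset.sum_eq_zero fun j _ => by rw [if_neg (by omega), mul_zero]

theorem natDegree_invPi_lt {v : Fin n → R[X]} (hv : invPi v ≠ 0) : (invPi v).natDegree < n :=
  (natDegree_lt_iff_degree_lt hv).mpr (degree_invPi_lt v)

theorem eq_invPi {p : Biv R} (hp : p.degree < n) {v : Fin n → R[X]}
    (h : ∀ i : Fin n, p.coeff i = v i.rev) : p = invPi v := by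
  ext1 i
  rcases lt_or_ge i n with hi | hi
  · rw [h ⟨i, hi⟩, ← coeff_invPi v ⟨i, hi⟩]
  · rw [(degree_lt_iff_coeff_zero _ _).mp hp i hi,
      (degree_lt_iff_coeff_zero _ _).mp (degree_invPi_lt v) i hi]

theorem natDegree_invPi_le {v : Fin n → R[X]} {ρ : Fin n} (h : ∀ r < ρ, v r = 0) :
    (invPi v).natDegree ≤ ρ.rev := by
  rw [natDegree_le_iff_coeff_eq_zero]
  intro i hi
  rcases lt_or_ge i n with hin | hin
  · rw [coeff_invPi v ⟨i, hin⟩]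
    exact h _ (Fin.rev_lt_iff.mpr hi)
  · exact (degree_lt_iff_coeff_zero _ _).mp (degree_invPi_lt v) i hin

theorem exists_invPi_eq {p : Biv R} (hp : p.degree < n) : ∃ v : Fin n → R[X], invPi v = p :=
  ⟨fun r => p.coeff r.rev, (eq_invPi hp fun i => by rw [Fin.rev_rev]).symm⟩

theorem invPi_add (v w : Fin n → R[X]) : invPi (v + w) = invPi v + invPi w := by
  simp only [invPi, Pi.add_apply, map_add, add_mul, Finset.sum_add_distrib]

theorem invPi_smul (a : R[X]) (v : Fin n → R[X]) : invPi (a • v) = C a * invPi v := by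
  simp only [invPi, Pi.smul_apply, smul_eq_mul, map_mul, Finset.mul_sum, mul_assoc]

theorem invPi_mulVec {ι : Type*} [Fintype ι] (M : Matrix (Fin n) ι R[X]) (u : ι → R[X]) :
    invPi (M.mulVec u) = ∑ c, C (u c) * invPi (M.col c) := by
  simp only [invPi, Matrix.mulVec, dotProduct, Matrix.col_apply, map_sum, map_mul,
    Finset.sum_mul, Finset.mul_sum]
  rw [Finset.sum_comm]
  exact Finset.sum_congr rfl fun _ _ => Finset.sum_congr rfl fun _ _ => by ring

variable {t : ℕ} {f : Fin t → Biv R} {dy D : ℕ}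

theorem invPi_sylvester_col (hdy : ∀ i, (f i).natDegree ≤ dy) (j : Fin t) (e : Fin D) :
    invPi ((_root_.sylvester f dy D).col (finProdFinEquiv (j, e))) = X ^ (D - 1 - e : ℕ) * f j := by
  have hdeg : (X ^ (D - 1 - e : ℕ) * f j).natDegree < dy + D := by
    have hX : (X ^ (D - 1 - e : ℕ) : Biv R).natDegree ≤ D - 1 - e := natDegree_X_pow_le _
    have := natDegree_mul_le_of_le hX (hdy j)
    omega
  refine (eq_invPi (degree_le_natDegree.trans_lt (Nat.cast_lt.mpr hdeg)) fun i => ?_).symm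
  have hdiv : (finProdFinEquiv (j, e) : ℕ) / D = j :=
    congrArg (fun p : Fin t × Fin D => (p.1 : ℕ)) (finProdFinEquiv.symm_apply_apply (j, e))
  have hmod : (finProdFinEquiv (j, e) : ℕ) % D = e :=
    congrArg (fun p : Fin t × Fin D => (p.2 : ℕ)) (finProdFinEquiv.symm_apply_apply (j, e))
  have hrow : dy + D - 1 - (i.rev : ℕ) = i := by rw [Fin.val_rev]; omega
  simp only [Matrix.col_apply, _root_.sylvester, hdiv, hmod, hrow, j.isLt, dif_pos, Fin.eta]

theorem invPi_sylvester_mulVec (hdy : ∀ i, (f i).natDegree ≤ dy) (u : Fin (t * D) → R[X]) :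
    invPi ((_root_.sylvester f dy D).mulVec u) =
      ∑ j, invPi (fun e => u (finProdFinEquiv (j, e))) * f j := by
  rw [invPi_mulVec, ← finProdFinEquiv.sum_comp, Fintype.sum_prod_type]
  refine Finset.sum_congr rfl fun j _ => ?_
  simp only [invPi_sylvester_col hdy]
  simp only [invPi, Finset.sum_mul, mul_assoc]

theorem exists_invPi_sylvester_mulVec_eq (hdy : ∀ i, (f i).natDegree ≤ dy) {w : Fin t → Biv R}
    (hw : ∀ j, (w j).degree < D) :
    ∃ u, invPi ((_root_.sylvester f dy D).mulVec u) = ∑ j, w j * f j := by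
  choose v hv using fun j => exists_invPi_eq (hw j)
  refine ⟨fun c => v (finProdFinEquiv.symm c).1 (finProdFinEquiv.symm c).2, ?_⟩
  simp only [invPi_sylvester_mulVec hdy, Equiv.symm_apply_apply, hv]

end PolynomialVectors

section ColumnSpans

variable {R : Type*} [CommRing R] {ι κ : Type*} [Fintype κ] {g : R}

/-- `v` is congruent modulo `g` to an `R`-linear combination of the columns of `M`. For the
Sylvester matrix and `g = x^k`, these vectors represent the elements of the ideal `⟨f, x^k⟩`
obtained from cofactors of bounded `y`-degree. -/
def InColSpanMod (g : R) (M : Matrix ι κ R) (v : ι → R) : Prop :=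
  ∃ u w, v = M.mulVec u + g • w

theorem inColSpanMod_col (M : Matrix ι κ R) (c : κ) : InColSpanMod g M (M.col c) := by
  classical
  exact ⟨Pi.single c 1, 0, by rw [Matrix.mulVec_single_one, smul_zero, add_zero]⟩

theorem inColSpanMod_smul (M : Matrix ι κ R) (w : ι → R) : InColSpanMod g M (g • w) :=
  ⟨0, w, by rw [Matrix.mulVec_zero, zero_add]⟩

theorem inColSpanMod_iff_exists_map {M : Matrix ι κ R} {v : ι → R} :
    InColSpanMod g M v ↔ ∃ u, Ideal.Quotient.mk (Ideal.span {g}) ∘ v =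
      (M.map (Ideal.Quotient.mk (Ideal.span {g}))).mulVec u := by
  constructor
  · rintro ⟨u, w, rfl⟩
    refine ⟨Ideal.Quotient.mk _ ∘ u, funext fun r => ?_⟩
    rw [Function.comp_apply, Pi.add_apply, map_add, RingHom.map_mulVec, add_eq_left,
      Ideal.Quotient.eq_zero_iff_mem, Ideal.mem_span_singleton]
    exact dvd_mul_right g (w r)
  · rintro ⟨u, hu⟩
    choose u' hu' using fun c => Ideal.Quotient.mk_surjective (u c)
    obtain rfl : Ideal.Quotient.mk _ ∘ u' = u := funext hu'
    have hdvd (r : ι) : g ∣ v r - M.mulVec u' r := by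
      rw [← Ideal.mem_span_singleton, ← Ideal.Quotient.eq, RingHom.map_mulVec]
      exact congrFun hu r
    choose w hw using hdvd
    exact ⟨u', w, funext fun r => eq_add_of_sub_eq' (hw r)⟩

theorem inColSpanMod_congr [DecidableEq κ] {M N : Matrix ι κ R}
    {U : Matrix κ κ (R ⧸ Ideal.span {g})} (hU : IsUnit U.det)
    (hN : N.map (Ideal.Quotient.mk (Ideal.span {g})) =
      M.map (Ideal.Quotient.mk (Ideal.span {g})) * U) {v : ι → R} :
    InColSpanMod g N v ↔ InColSpanMod g M v := by
  rw [inColSpanMod_iff_exists_map, inColSpanMod_iff_exists_map, hN]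
  constructor
  · rintro ⟨u, hu⟩
    exact ⟨U.mulVec u, by rw [hu, Matrix.mulVec_mulVec]⟩
  · rintro ⟨u, hu⟩
    refine ⟨U⁻¹.mulVec u, ?_⟩
    rw [hu, Matrix.mulVec_mulVec, Matrix.mul_assoc, U.mul_nonsing_inv hU, Matrix.mul_one]

end ColumnSpans

section SylvesterIdeal

variable {R : Type*} [CommRing R] {J : Ideal (Biv R)} {t : ℕ} {f : Fin t → Biv R} {dy D : ℕ}
  {g : R[X]}

theorem invPi_mem_of_inColSpanMod_sylvester (hf : ∀ i, f i ∈ J) (hg : C g ∈ J)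
    (hdy : ∀ i, (f i).natDegree ≤ dy) {v : Fin (dy + D) → R[X]}
    (hv : InColSpanMod g (_root_.sylvester f dy D) v) : invPi v ∈ J := by
  obtain ⟨u, w, rfl⟩ := hv
  rw [invPi_add, invPi_sylvester_mulVec hdy, invPi_smul]
  exact J.add_mem (J.sum_mem fun j _ => J.mul_mem_left _ (hf j)) (J.mul_mem_right _ hg)

theorem exists_inColSpanMod_sylvester (hdy : ∀ i, (f i).natDegree ≤ dy) {w : Fin t → Biv R}
    (hw : ∀ j, (w j).degree < D) {w₀ : Biv R} (hw₀ : w₀.degree < D) :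
    ∃ v, InColSpanMod g (_root_.sylvester f dy D) v ∧
      invPi v = (∑ j, w j * f j) + w₀ * C g := by
  obtain ⟨u, hu⟩ := exists_invPi_sylvester_mulVec_eq hdy hw
  obtain ⟨v₀, hv₀⟩ := exists_invPi_eq (n := dy + D)
    (hw₀.trans_le (Nat.cast_le.mpr (Nat.le_add_left D dy)))
  exact ⟨_, ⟨u, v₀, rfl⟩, by rw [invPi_add, hu, invPi_smul, hv₀, mul_comm]⟩

end SylvesterIdeal

section HowellForms

variable {n m : ℕ} {piv : Fin m → Fin n}

/-- `H` is in column echelon form with pivot rows `piv`: the first nonzero entry of a nonzero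
column `c` is in row `piv c`, and these rows strictly increase. The value of `piv` at a zero column
is irrelevant. -/
structure IsEchelon {α : Type*} [Zero α] (H : Matrix (Fin n) (Fin m) α) (piv : Fin m → Fin n) :
    Prop where
  pivot_ne_zero {c : Fin m} (hc : colNZ H c) : H (piv c) c ≠ 0
  eq_zero {c : Fin m} {r : Fin n} (hc : colNZ H c) (hr : r < piv c) : H r c = 0
  strictMonoOn : StrictMonoOn piv {c | colNZ H c}

theorem colNZ_map_iff {α β : Type*} [Zero α] [Zero β] {H : Matrix (Fin n) (Fin m) α} {φ : α → β}
    (hφ : ∀ r c, φ (H r c) = 0 ↔ H r c = 0) {c : Fin m} : colNZ (H.map φ) c ↔ colNZ H c :=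
  exists_congr fun r => (hφ r c).not

theorem IsEchelon.of_map {α β : Type*} [Zero α] [Zero β] {H : Matrix (Fin n) (Fin m) α}
    {φ : α → β} (hφ : ∀ r c, φ (H r c) = 0 ↔ H r c = 0) (h : IsEchelon (H.map φ) piv) :
    IsEchelon H piv where
  pivot_ne_zero hc := (hφ _ _).not.mp (h.pivot_ne_zero ((colNZ_map_iff hφ).mpr hc))
  eq_zero hc hr := (hφ _ _).mp (h.eq_zero ((colNZ_map_iff hφ).mpr hc) hr)
  strictMonoOn := h.strictMonoOn.mono fun _ hc => (colNZ_map_iff hφ).mpr hc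

/-- The closure property that distinguishes Howell forms among echelon forms: a combination of the
columns of `H` vanishing down to the pivot row of a nonzero column `c₀` is a combination of the
columns after `c₀`. -/
def HasHowellProperty {R : Type*} [CommRing R] (H : Matrix (Fin n) (Fin m) R)
    (piv : Fin m → Fin n) : Prop :=
  ∀ c₀, colNZ H c₀ → ∀ v : Fin m → R, (∀ r ≤ piv c₀, H.mulVec v r = 0) →
    ∃ v', H.mulVec v' = H.mulVec v ∧ ∀ c ≤ c₀, v' c = 0

namespace HasHowellProperty

variable {R : Type*} [CommRing R] {H : Matrix (Fin n) (Fin m) R}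

theorem exists_mulVec_eq (hH : HasHowellProperty H piv) {v : Fin m → R} {ρ : Fin n}
    (hv : ∀ r < ρ, H.mulVec v r = 0) :
    ∃ v', H.mulVec v' = H.mulVec v ∧ ∀ c, colNZ H c → piv c < ρ → v' c = 0 := by
  classical
  rcases {c | colNZ H c ∧ piv c < ρ}.eq_empty_or_nonempty with hempty | hne
  · exact ⟨v, rfl, fun c hc hcρ => (Set.eq_empty_iff_forall_notMem.mp hempty c ⟨hc, hcρ⟩).elim⟩
  · obtain ⟨c₀, ⟨hc₀, hc₀ρ⟩, hmax⟩ :=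
      Set.exists_max_image {c | colNZ H c ∧ piv c < ρ} id (Set.toFinite _) hne
    obtain ⟨v', hv', hzero⟩ := hH c₀ hc₀ v fun r hr => hv r (hr.trans_lt hc₀ρ)
    exact ⟨v', hv', fun c hc hcρ => hzero c (hmax c ⟨hc, hcρ⟩)⟩

theorem exists_pivot_dvd (hH : HasHowellProperty H piv) (hpiv : IsEchelon H piv) {v : Fin m → R}
    {ρ : Fin n} (hv : ∀ r < ρ, H.mulVec v r = 0) (hvρ : H.mulVec v ρ ≠ 0) :
    ∃ c, colNZ H c ∧ piv c = ρ ∧ H (piv c) c ∣ H.mulVec v ρ := by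
  obtain ⟨v', hv', hzero⟩ := hH.exists_mulVec_eq hv
  rw [← hv'] at hvρ ⊢
  simp only [Matrix.mulVec, dotProduct] at hvρ ⊢
  have piv_eq {c : Fin m} (hc : H ρ c * v' c ≠ 0) : colNZ H c ∧ piv c = ρ := by
    have hcol : colNZ H c := ⟨ρ, left_ne_zero_of_mul hc⟩
    refine ⟨hcol, le_antisymm ?_ ?_⟩ <;> by_contra! hlt
    · exact left_ne_zero_of_mul hc (hpiv.eq_zero hcol hlt)
    · exact right_ne_zero_of_mul hc (hzero c hcol hlt)
  obtain ⟨c, -, hc⟩ := Finset.exists_ne_zero_of_sum_ne_zero hvρ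
  obtain ⟨hcol, rfl⟩ := piv_eq hc
  refine ⟨c, hcol, rfl, Finset.dvd_sum fun c' _ => ?_⟩
  by_cases hc' : H (piv c) c' * v' c' = 0
  · exact hc' ▸ dvd_zero _
  · obtain ⟨hcol', hpiv'⟩ := piv_eq hc'
    rw [hpiv.strictMonoOn.injOn hcol' hcol hpiv']
    exact dvd_mul_right _ _

end HasHowellProperty

variable {K : Type*} [Field K] {k : ℕ} {B : Matrix (Fin n) (Fin m) K[X]}

theorem mk_eq_mk_iff_of_degree_lt {p q : K[X]} (hp : p.degree < k) (hq : q.degree < k) :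
    Ideal.Quotient.mk (Ideal.span {(X : K[X]) ^ k}) p =
      Ideal.Quotient.mk (Ideal.span {X ^ k}) q ↔ p = q := by
  refine ⟨fun h => sub_eq_zero.mp ?_, congrArg _⟩
  rw [Ideal.Quotient.eq, Ideal.mem_span_singleton] at h
  exact eq_zero_of_dvd_of_degree_lt h
    (((degree_sub_le _ _).trans_lt (max_lt hp hq)).trans_eq (degree_X_pow k).symm)

theorem mk_eq_zero_iff_of_degree_lt {p : K[X]} (hp : p.degree < k) :
    Ideal.Quotient.mk (Ideal.span {(X : K[X]) ^ k}) p = 0 ↔ p = 0 := by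
  rw [← map_zero (Ideal.Quotient.mk _),
    mk_eq_mk_iff_of_degree_lt hp (degree_zero.trans_lt (WithBot.bot_lt_coe k))]

theorem lt_and_eq_X_pow_of_mk_eq {p : K[X]} {e : ℕ} (hp : p.degree < k)
    (hne : Ideal.Quotient.mk (Ideal.span {(X : K[X]) ^ k}) p ≠ 0)
    (heq : Ideal.Quotient.mk (Ideal.span {(X : K[X]) ^ k}) p =
      Ideal.Quotient.mk (Ideal.span {X ^ k}) (X ^ e)) : e < k ∧ p = X ^ e := by
  have hlt : e < k := by
    by_contra! hle
    rw [heq, Ne, Ideal.Quotient.eq_zero_iff_mem, Ideal.mem_span_singleton] at hne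
    exact hne (pow_dvd_pow X hle)
  exact ⟨hlt, (mk_eq_mk_iff_of_degree_lt hp (by rwa [degree_X_pow, Nat.cast_lt])).mp heq⟩

theorem mk_dvd_mk_iff_of_dvd {R : Type*} [CommRing R] {a b g : R} (ha : a ∣ g) :
    Ideal.Quotient.mk (Ideal.span {g}) a ∣ Ideal.Quotient.mk (Ideal.span {g}) b ↔ a ∣ b := by
  refine ⟨?_, map_dvd _⟩
  rintro ⟨c, hc⟩
  obtain ⟨c, rfl⟩ := Ideal.Quotient.mk_surjective c
  rw [← map_mul, Ideal.Quotient.eq, Ideal.mem_span_singleton] at hc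
  exact (dvd_sub_left (dvd_mul_right a c)).mp (ha.trans hc)

/-- `B` has the properties of the canonical lift to `K[x]` of a matrix in Howell normal form over
`K[x]/⟨x^k⟩` with pivot rows `piv`. That the pivots are powers of `x` is only recorded through
`degree_pivot_le`: a pivot has the least degree among the entries which the column span modulo
`x^k` allows in its place. -/
structure IsHowellLift (k : ℕ) (B : Matrix (Fin n) (Fin m) K[X]) (piv : Fin m → Fin n) : Prop
    extends IsEchelon B piv where
  degree_lt (r : Fin n) (c : Fin m) : (B r c).degree < k
  monic_pivot {c : Fin m} (hc : colNZ B c) : (B (piv c) c).Monic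
  degree_lt_pivot {c c' : Fin m} (hc : colNZ B c) (h : c' < c) :
    (B (piv c) c').degree < (B (piv c) c).degree
  degree_pivot_le {v : Fin n → K[X]} (hv : InColSpanMod (X ^ k) B v) {ρ : Fin n}
    (h0 : ∀ r < ρ, v r = 0) (hρ : v ρ ≠ 0) (hdeg : (v ρ).degree < k) :
    ∃ c, colNZ B c ∧ piv c = ρ ∧ (B (piv c) c).degree ≤ (v ρ).degree

theorem IsHowellForm.inColSpanMod_iff {M : Matrix (Fin n) (Fin m) K[X]}
    (h : IsHowellForm k (M.map (Ideal.Quotient.mk _)) (B.map (Ideal.Quotient.mk _)))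
    {v : Fin n → K[X]} : InColSpanMod (X ^ k) B v ↔ InColSpanMod (X ^ k) M v := by
  obtain ⟨⟨U, hU, hB⟩, -⟩ := h
  exact inColSpanMod_congr hU hB

theorem IsHowellForm.exists_isHowellLift
    {M : Matrix (Fin n) (Fin m) (K[X] ⧸ Ideal.span {(X : K[X]) ^ k})}
    (h : IsHowellForm k M (B.map (Ideal.Quotient.mk _))) (hlift : ∀ r c, (B r c).degree < k) :
    ∃ piv, IsHowellLift k B piv := by
  obtain ⟨-, -, piv, pexp, hpiv, hmono, hred, hHow⟩ := h
  have hzero r c := mk_eq_zero_iff_of_degree_lt (hlift r c)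
  have hechelon : IsEchelon (B.map (Ideal.Quotient.mk (Ideal.span {X ^ k}))) piv :=
    ⟨fun hc => (hpiv _ hc).1, fun hc => (hpiv _ hc).2.1 _, fun _ _ _ hc' hlt => hmono _ _ hlt hc'⟩
  have hpexp {c} (hc : colNZ B c) : pexp c < k ∧ B (piv c) c = X ^ pexp c := by
    obtain ⟨hne, -, heq⟩ := hpiv c ((colNZ_map_iff hzero).mpr hc)
    exact lt_and_eq_X_pow_of_mk_eq (hlift _ _) hne heq
  refine ⟨piv, hechelon.of_map hzero, hlift, fun hc => (hpexp hc).2 ▸ monic_X_pow _, ?_, ?_⟩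
  · intro c c' hc hlt
    obtain ⟨u, hu, hdeg⟩ := hred c c' hlt ((colNZ_map_iff hzero).mpr hc)
    obtain ⟨hlt, heq⟩ := hpexp hc
    have hu' : u = B (piv c) c' := (mk_eq_mk_iff_of_degree_lt
      (hdeg.trans (Nat.cast_lt.mpr hlt)) (hlift _ _)).mp hu
    rwa [heq, degree_X_pow, ← hu']
  · intro v hv ρ h0 hρ hdeg
    obtain ⟨u, hu⟩ := inColSpanMod_iff_exists_map.mp hv
    obtain ⟨c, hc, hcρ, hdvd⟩ := HasHowellProperty.exists_pivot_dvd (v := u) (ρ := ρ) hHow hechelon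
      (fun r hr => by rw [← hu, Function.comp_apply, h0 r hr, map_zero])
      (by rwa [← hu, Function.comp_apply, Ne, mk_eq_zero_iff_of_degree_lt hdeg])
    rw [← hu] at hdvd
    have hc' : colNZ B c := (colNZ_map_iff hzero).mp hc
    have hpow : B (piv c) c ∣ X ^ k := (hpexp hc').2 ▸ pow_dvd_pow X (hpexp hc').1.le
    exact ⟨c, hc', hcρ, degree_le_of_dvd ((mk_dvd_mk_iff_of_dvd hpow).mp hdvd) hρ⟩

end HowellForms

section Completion

variable {K : Type*} [Field K] {n m k : ℕ} {B : Matrix (Fin n) (Fin m) K[X]} {piv : Fin m → Fin n}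

open Classical in
/-- The column with pivot row `ρ` of the Hermite normal form of `[B | x^k I]`, when `B` is the lift
of a Howell form modulo `x^k`: the column of `B` with pivot row `ρ` if there is one, and
`x^k` times the `ρ`-th unit vector otherwise. -/
def completedCol (k : ℕ) (B : Matrix (Fin n) (Fin m) K[X]) (piv : Fin m → Fin n) (ρ : Fin n) :
    Fin n → K[X] :=
  if h : ∃ c, colNZ B c ∧ piv c = ρ then B.col h.choose else Pi.single ρ (X ^ k)

theorem completedCol_of_not_exists {ρ : Fin n} (h : ¬∃ c, colNZ B c ∧ piv c = ρ) :
    completedCol k B piv ρ = Pi.single ρ (X ^ k) :=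
  dif_neg h

theorem inColSpanMod_completedCol (ρ : Fin n) :
    InColSpanMod (X ^ k) B (completedCol k B piv ρ) := by
  rw [completedCol]
  split_ifs with h
  · exact inColSpanMod_col B _
  · simpa only [← Pi.single_smul, smul_eq_mul, mul_one] using
      inColSpanMod_smul (g := X ^ k) B (Pi.single ρ 1)

theorem exists_pivot_of_degree_completedCol_lt {ρ : Fin n}
    (h : (completedCol k B piv ρ ρ).degree < k) : ∃ c, colNZ B c ∧ piv c = ρ := by
  by_contra hnone
  rw [completedCol_of_not_exists hnone, Pi.single_eq_same, degree_X_pow] at h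
  exact h.false

namespace IsHowellLift

theorem completedCol_piv (hB : IsHowellLift k B piv) {c : Fin m} (hc : colNZ B c) :
    completedCol k B piv (piv c) = B.col c := by
  have h : ∃ c', colNZ B c' ∧ piv c' = piv c := ⟨c, hc, rfl⟩
  rw [completedCol, dif_pos h, hB.strictMonoOn.injOn h.choose_spec.1 hc h.choose_spec.2]

theorem monic_completedCol_self (hB : IsHowellLift k B piv) (ρ : Fin n) :
    (completedCol k B piv ρ ρ).Monic := by
  by_cases h : ∃ c, colNZ B c ∧ piv c = ρ
  · obtain ⟨c, hc, rfl⟩ := h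
    rw [hB.completedCol_piv hc]
    exact hB.monic_pivot hc
  · rw [completedCol_of_not_exists h, Pi.single_eq_same]
    exact monic_X_pow k

theorem degree_completedCol_self_le (hB : IsHowellLift k B piv) (ρ : Fin n) :
    (completedCol k B piv ρ ρ).degree ≤ k := by
  by_cases h : ∃ c, colNZ B c ∧ piv c = ρ
  · obtain ⟨c, hc, rfl⟩ := h
    rw [hB.completedCol_piv hc]
    exact (hB.degree_lt _ c).le
  · rw [completedCol_of_not_exists h, Pi.single_eq_same, degree_X_pow]

theorem completedCol_eq_zero (hB : IsHowellLift k B piv) {r ρ : Fin n} (hr : r < ρ) :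
    completedCol k B piv ρ r = 0 := by
  by_cases h : ∃ c, colNZ B c ∧ piv c = ρ
  · obtain ⟨c, hc, rfl⟩ := h
    rw [hB.completedCol_piv hc]
    exact hB.eq_zero hc hr
  · rw [completedCol_of_not_exists h, Pi.single_eq_of_ne hr.ne]

theorem degree_completedCol_lt (hB : IsHowellLift k B piv) {r ρ : Fin n} (hr : ρ < r) :
    (completedCol k B piv ρ r).degree < (completedCol k B piv r r).degree := by
  by_cases hρ : ∃ c, colNZ B c ∧ piv c = ρ
  · obtain ⟨c, hc, rfl⟩ := hρ
    rw [hB.completedCol_piv hc]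
    by_cases hr' : ∃ c', colNZ B c' ∧ piv c' = r
    · obtain ⟨c', hc', rfl⟩ := hr'
      rw [hB.completedCol_piv hc']
      exact hB.degree_lt_pivot hc' ((hB.strictMonoOn.lt_iff_lt hc hc').mp hr)
    · rw [completedCol_of_not_exists hr', Pi.single_eq_same, degree_X_pow]
      exact hB.degree_lt r c
  · rw [completedCol_of_not_exists hρ, Pi.single_eq_of_ne hr.ne', degree_zero, bot_lt_iff_ne_bot,
      Ne, degree_eq_bot]
    exact (hB.monic_completedCol_self r).ne_zero

theorem degree_completedCol_self_le_of_inColSpanMod (hB : IsHowellLift k B piv) {v : Fin n → K[X]}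
    (hv : InColSpanMod (X ^ k) B v) {ρ : Fin n} (h0 : ∀ r < ρ, v r = 0) (hρ : v ρ ≠ 0) :
    (completedCol k B piv ρ ρ).degree ≤ (v ρ).degree := by
  rcases lt_or_ge (v ρ).degree k with hlt | hge
  · obtain ⟨c, hc, rfl, hle⟩ := hB.degree_pivot_le hv h0 hρ hlt
    rwa [hB.completedCol_piv hc]
  · exact (hB.degree_completedCol_self_le ρ).trans hge

end IsHowellLift

end Completion

section Identification

variable {K : Type*} [Field K] {n m k N : ℕ} {B : Matrix (Fin n) (Fin m) K[X]}
  {piv : Fin m → Fin n} {J : Ideal (Biv K)} {A : ℕ → Biv K}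

theorem IsHermiteSeq.ne_zero_of_C_X_pow_mem (hA : IsHermiteSeq J A) (hk : C (X ^ k) ∈ J) (i : ℕ) :
    A i ≠ 0 :=
  hA.ne_zero (J.mul_mem_right (X ^ i) hk) (natDegree_C_mul_X_pow_le _ _)
    (by rw [coeff_C_mul_X_pow, if_pos rfl]; exact pow_ne_zero k X_ne_zero)

namespace IsHowellLift

theorem degree_completedCol_self_le_leadingCoeff (hB : IsHowellLift k B piv)
    (hA : IsHermiteSeq J A) {ρ : Fin n} (hA0 : A ρ.rev ≠ 0)
    (hspan : ∃ v, InColSpanMod (X ^ k) B v ∧ invPi v = A ρ.rev) :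
    (completedCol k B piv ρ ρ).degree ≤ (A ρ.rev).leadingCoeff.degree := by
  obtain ⟨v, hv, hvA⟩ := hspan
  have hvcoeff (r : Fin n) : v r = (A ρ.rev).coeff r.rev := by
    rw [← hvA, coeff_invPi, Fin.rev_rev]
  have hvρ : v ρ = (A ρ.rev).leadingCoeff := (hvcoeff ρ).trans (hA.coeff_self hA0)
  rw [← hvρ]
  refine hB.degree_completedCol_self_le_of_inColSpanMod hv (fun r hr => ?_) ?_
  · rw [hvcoeff]
    exact coeff_eq_zero_of_natDegree_lt ((hA.natDegree_eq hA0).trans_lt (Fin.rev_lt_rev.mpr hr))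
  · rwa [hvρ, Ne, leadingCoeff_eq_zero]

theorem invPi_completedCol_eq (hB : IsHowellLift k B piv) (hA : IsHermiteSeq J A)
    (hA0 : ∀ i, A i ≠ 0) (hmem : ∀ v, InColSpanMod (X ^ k) B v → invPi v ∈ J)
    (hspan : ∀ i ≤ N, ∃ v, InColSpanMod (X ^ k) B v ∧ invPi v = A i) {ρ : Fin n}
    (hρ : (ρ.rev : ℕ) ≤ N) : invPi (completedCol k B piv ρ) = A ρ.rev := by
  have hcoeff : (invPi (completedCol k B piv ρ)).coeff ρ.rev = completedCol k B piv ρ ρ := by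
    rw [coeff_invPi, Fin.rev_rev]
  refine hA.eq_of_reduced (hmem _ (inColSpanMod_completedCol ρ))
    (natDegree_invPi_le fun r hr => hB.completedCol_eq_zero hr)
    (hcoeff ▸ hB.monic_completedCol_self ρ)
    (hcoeff ▸ hB.degree_completedCol_self_le_leadingCoeff hA (hA0 _) (hspan _ hρ)) ?_
  intro l hl _
  obtain ⟨r, rfl⟩ : ∃ r : Fin n, l = r.rev := ⟨Fin.rev ⟨l, hl.trans ρ.rev.isLt⟩, by simp⟩
  rw [coeff_invPi, Fin.rev_rev]
  exact (hB.degree_completedCol_lt (Fin.rev_lt_rev.mp hl)).trans_le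
    (hB.degree_completedCol_self_le_leadingCoeff hA (hA0 _) (hspan _ (hl.le.trans hρ)))

end IsHowellLift

end Identification

section Indexing

theorem val_add_val_eq_of_surjOn_Icc {m n : ℕ} {p : Fin m → Fin n} {c a : Fin m} (hca : c ≤ a)
    (hp : StrictMonoOn p (Set.Icc c a))
    (hsurj : Set.SurjOn p (Set.Icc c a) (Set.Icc (p c) (p a))) :
    (c + p a : ℕ) = a + p c := by
  have himage : (Finset.Icc c a).image p = Finset.Icc (p c) (p a) := by
    rw [← Finset.coe_inj, Finset.coe_image, Finset.coe_Icc, Finset.coe_Icc]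
    exact Set.Subset.antisymm (hp.monotoneOn.image_Icc_subset) hsurj
  have hcard := Finset.card_image_of_injOn (s := Finset.Icc c a)
    (by simpa only [Finset.coe_Icc] using hp.injOn)
  rw [himage, Fin.card_Icc, Fin.card_Icc] at hcard
  have hpca : (p c : ℕ) ≤ p a :=
    hp.monotoneOn (Set.left_mem_Icc.mpr hca) (Set.right_mem_Icc.mpr hca) hca
  omega

variable {K : Type*} [Field K] {n m k N : ℕ} {B : Matrix (Fin n) (Fin m) K[X]}
  {piv : Fin m → Fin n} {J : Ideal (Biv K)} {A : ℕ → Biv K}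

theorem extSeq_of_le {L r i : ℕ} {c : Fin m} (hc : (c : ℕ) + 1 = i) (hi : i ≤ L) :
    extSeq B L r k i = invPi (B.col c) := by
  subst hc
  exact dif_pos ⟨hi, c.isLt⟩

theorem extSeq_of_lt {L r i : ℕ} {ρ : Fin n} (hi : L < i) (hρ : (ρ : ℕ) + 1 + L = r + i) :
    extSeq B L r k i = invPi (Pi.single ρ (X ^ k)) := by
  rw [extSeq, dif_neg (by omega)]
  congr 1
  ext1 r'
  rw [Pi.single_apply]
  exact if_congr (by rw [Fin.ext_iff]; omega) rfl rfl

namespace IsHowellLift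

theorem completedCol_self_eq_leadingCoeff (hB : IsHowellLift k B piv) (hA : IsHermiteSeq J A)
    {ρ : Fin n} (hcol : invPi (completedCol k B piv ρ) = A ρ.rev) :
    completedCol k B piv ρ ρ = (A ρ.rev).leadingCoeff := by
  have hcoeff : (A ρ.rev).coeff ρ.rev = completedCol k B piv ρ ρ := by
    rw [← hcol, coeff_invPi, Fin.rev_rev]
  have hA0 : A ρ.rev ≠ 0 := fun h =>
    (hB.monic_completedCol_self ρ).ne_zero (by rw [← hcoeff, h, coeff_zero])
  rw [← hcoeff, hA.coeff_self hA0]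

theorem exists_pivot_of_monic (hB : IsHowellLift k B piv) (hk : 0 < k) (hA : IsHermiteSeq J A)
    {ρ : Fin n} (hcol : invPi (completedCol k B piv ρ) = A ρ.rev) (hmonic : (A ρ.rev).Monic) :
    ∃ c, colNZ B c ∧ piv c = ρ := by
  apply exists_pivot_of_degree_completedCol_lt (k := k)
  rw [hB.completedCol_self_eq_leadingCoeff hA hcol, hmonic.leadingCoeff, degree_one]
  exact Nat.cast_pos.mpr hk

theorem exists_pivot_of_le (hB : IsHowellLift k B piv) (hA : IsHermiteSeq J A)
    (hcol : ∀ ρ : Fin n, (ρ.rev : ℕ) ≤ N → invPi (completedCol k B piv ρ) = A ρ.rev)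
    {a : Fin m} (ha : colNZ B a) {ρ : Fin n} (hρ : ρ ≤ piv a) (hρN : (ρ.rev : ℕ) ≤ N) :
    ∃ c, colNZ B c ∧ piv c = ρ := by
  have hrev : ((piv a).rev : ℕ) ≤ ρ.rev := Fin.rev_le_rev.mpr hρ
  have ha' := hB.completedCol_self_eq_leadingCoeff hA (hcol _ (hrev.trans hρN))
  have hA0 : A (piv a).rev ≠ 0 := by
    rw [Ne, ← leadingCoeff_eq_zero, ← ha']
    exact (hB.monic_completedCol_self _).ne_zero
  apply exists_pivot_of_degree_completedCol_lt (k := k)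
  calc (completedCol k B piv ρ ρ).degree
      = (A ρ.rev).leadingCoeff.degree := by
        rw [hB.completedCol_self_eq_leadingCoeff hA (hcol ρ hρN)]
    _ ≤ (A (piv a).rev).leadingCoeff.degree := hA.degree_leadingCoeff_anti hA0 hrev
    _ = (B (piv a) a).degree := by rw [← ha', hB.completedCol_piv ha, Matrix.col_apply]
    _ < k := hB.degree_lt _ _

theorem val_add_val_piv_eq (hB : IsHowellLift k B piv) (hA : IsHermiteSeq J A)
    (hcol : ∀ ρ : Fin n, (ρ.rev : ℕ) ≤ N → invPi (completedCol k B piv ρ) = A ρ.rev)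
    {a c : Fin m} (ha : ∀ c, colNZ B c ↔ c ≤ a) (hc : colNZ B c) (hcN : ((piv c).rev : ℕ) ≤ N) :
    (c + piv a : ℕ) = a + piv c := by
  refine val_add_val_eq_of_surjOn_Icc ((ha c).mp hc)
    (hB.strictMonoOn.mono fun c' hc' => (ha c').mpr hc'.2) ?_
  rintro ρ ⟨hcρ, hρa⟩
  obtain ⟨c', hc', rfl⟩ := hB.exists_pivot_of_le hA hcol ((ha a).mpr le_rfl) hρa
    (le_trans (Fin.rev_le_rev.mpr hcρ) hcN)
  exact ⟨c', ⟨(hB.strictMonoOn.le_iff_le hc hc').mp hcρ, (ha c').mp hc'⟩, rfl⟩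

theorem extSeq_eq (hB : IsHowellLift k B piv) (hA : IsHermiteSeq J A)
    (hcol : ∀ ρ : Fin n, (ρ.rev : ℕ) ≤ N → invPi (completedCol k B piv ρ) = A ρ.rev)
    {a : Fin m} (ha : ∀ c, colNZ B c ↔ c ≤ a) {i : ℕ} (hin : i < n) (hiN : i ≤ N) :
    extSeq B (a + 1) (piv a + 1) k (a + 1 + n - (piv a + 1) - i) = A i := by
  obtain ⟨ρ, rfl⟩ : ∃ ρ : Fin n, i = ρ.rev := ⟨Fin.rev ⟨i, hin⟩, by simp⟩
  rw [← hcol ρ hiN]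
  have hrev : (ρ.rev : ℕ) = n - (ρ + 1) := Fin.val_rev ρ
  rcases le_or_gt ρ (piv a) with hle | hlt
  · obtain ⟨c, hc, rfl⟩ := hB.exists_pivot_of_le hA hcol ((ha a).mpr le_rfl) hle hiN
    have hindex := hB.val_add_val_piv_eq hA hcol ha hc hiN
    rw [hB.completedCol_piv hc, extSeq_of_le (c := c) (by omega) (by omega)]
  · have hnone : ¬∃ c, colNZ B c ∧ piv c = ρ := by
      rintro ⟨c, hc, rfl⟩
      exact hlt.not_ge (hB.strictMonoOn.monotoneOn hc ((ha a).mpr le_rfl) ((ha c).mp hc))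
    rw [completedCol_of_not_exists hnone, extSeq_of_lt (ρ := ρ) (by omega) (by omega)]

theorem piv_add_one_eq (hB : IsHowellLift k B piv) {c : Fin m} (hc : colNZ B c) {r : ℕ}
    (hr : 1 ≤ r ∧ r ≤ n) (hzero : ∀ ρ : Fin n, (ρ : ℕ) + 1 < r → B ρ c = 0)
    (hne : ∀ ρ : Fin n, (ρ : ℕ) + 1 = r → B ρ c ≠ 0) : (piv c : ℕ) + 1 = r := by
  refine le_antisymm ?_ (not_lt.mp fun hlt => hB.pivot_ne_zero hc (hzero _ hlt))
  by_contra! hlt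
  refine hne ⟨r - 1, by omega⟩ (Nat.sub_add_cancel hr.1) (hB.eq_zero hc ?_)
  exact Fin.lt_def.mpr (by rw [Fin.val_mk]; omega)

theorem exists_extSeq_monic (hB : IsHowellLift k B piv) (hk : 0 < k) (hA : IsHermiteSeq J A)
    (hcol : ∀ ρ : Fin n, (ρ.rev : ℕ) ≤ N → invPi (completedCol k B piv ρ) = A ρ.rev)
    (hNn : N < n) (hmonic : (A N).Monic) (hmin : ∀ i < N, ¬(A i).Monic) {L r : ℕ}
    (hLm : L ≤ m) (hL : ∀ c : Fin m, colNZ B c ↔ (c : ℕ) < L) (hr : 1 ≤ r ∧ r ≤ n)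
    (hrL : ∀ c : Fin m, (c : ℕ) + 1 = L → (∀ ρ : Fin n, (ρ : ℕ) + 1 < r → B ρ c = 0) ∧
      ∀ ρ : Fin n, (ρ : ℕ) + 1 = r → B ρ c ≠ 0) :
    ∃ L', 1 ≤ L' ∧ L' ≤ L ∧ (extSeq B L r k L').Monic ∧
      (∀ j, L' < j → j ≤ L → ¬(extSeq B L r k j).Monic) ∧ L + n - r - L' = N ∧
      ∀ i ≤ N, extSeq B L r k (L + n - r - i) = A i := by
  have hrev : (Fin.rev (Fin.rev ⟨N, hNn⟩) : ℕ) = N := by rw [Fin.rev_rev]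
  obtain ⟨c, hc, hcN⟩ := hB.exists_pivot_of_monic hk hA (hcol _ hrev.le) (by rwa [hrev])
  have hL1 : 1 ≤ L := Nat.one_le_of_lt ((hL c).mp hc)
  obtain ⟨a, rfl⟩ : ∃ a : Fin m, (a : ℕ) + 1 = L := ⟨⟨L - 1, by omega⟩, Nat.sub_add_cancel hL1⟩
  have ha c : colNZ B c ↔ c ≤ a := (hL c).trans Nat.lt_succ_iff
  obtain rfl := hB.piv_add_one_eq ((ha a).mpr le_rfl) hr (hrL a rfl).1 (hrL a rfl).2
  have hindex := hB.val_add_val_piv_eq hA hcol ha hc (by rw [hcN, hrev])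
  have hpivc : (piv c : ℕ) = n - (N + 1) := by rw [hcN, Fin.val_rev]
  have hca : c ≤ a := (ha c).mp hc
  have hext i (hi : i ≤ N) := hB.extSeq_eq hA hcol ha (hi.trans_lt hNn) hi
  refine ⟨c + 1, by omega, by omega, ?_, fun j hcj hja => ?_, by omega, hext⟩
  · rw [← hext N le_rfl] at hmonic
    convert hmonic using 2
    omega
  · have hi := hmin (a + 1 + n - (piv a + 1) - j) (by omega)
    rw [← hext _ (by omega)] at hi
    convert hi using 3
    omega

end IsHowellLift

end Indexing

theorem exists_monic_mem_of_finite {R : Type*} [CommRing R] {I : Ideal (Biv R)}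
    [Module.Finite R (Biv R ⧸ I)] : ∃ p ∈ I, p.Monic := by
  obtain ⟨p, hp, hzero⟩ := IsIntegral.of_finite R (Ideal.Quotient.mk I X)
  refine ⟨p.map C, ?_, hp.map _⟩
  have haeval := aeval_algHom_apply (Ideal.Quotient.mkₐ R I) X p
  rw [aeval_X_left_eq_map] at haeval
  rw [← Ideal.Quotient.eq_zero_iff_mem, ← hzero]
  exact haeval.symm

theorem howell_detaching_general {K : Type*} [Field K] {t σ : ℕ}
    (f : Fin t → Biv K) (dy D k L r : ℕ) (hk : 1 ≤ k) (hdy : ∀ i, (f i).natDegree ≤ dy)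
    (J : Ideal (Biv K)) (hJ : J = Ideal.span (Set.range f ∪ {C (X ^ k)}))
    (hmonic : ∃ p ∈ J, p.Monic)
    (Γ : Fin (σ + 1) → Biv K) (hΓ : IsReducedGB Γ J)
    (A : ℕ → Biv K) (hA : IsDetachingSeq Γ J A)
    (hDelta : ∀ i, (Γ (Fin.last σ)).natDegree ≤ i → i ≤ (Γ 0).natDegree →
      ∃ (w : Fin t → Biv K) (w0 : Biv K),
        (∀ j, (w j).degree < D) ∧ w0.degree < D ∧
        A i = (∑ j, w j * f j) + w0 * C (X ^ k))
    (Blift : Matrix (Fin (dy + D)) (Fin (t * D)) K[X])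
    (hlift : ∀ rr c, (Blift rr c).degree < k)
    (hHow : IsHowellForm k
      ((_root_.sylvester f dy D).map (Ideal.Quotient.mk (Ideal.span {X ^ k})))
      (Blift.map (Ideal.Quotient.mk (Ideal.span {X ^ k}))))
    (hL : L ≤ t * D ∧ ∀ c : Fin (t * D), colNZ Blift c ↔ (c : ℕ) < L)
    (hr : 1 ≤ r ∧ r ≤ dy + D ∧
      ∀ c : Fin (t * D), (c : ℕ) + 1 = L →
        (∀ rr : Fin (dy + D), (rr : ℕ) + 1 < r → Blift rr c = 0) ∧
        (∀ rr : Fin (dy + D), (rr : ℕ) + 1 = r → Blift rr c ≠ 0)) :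
    ∃ L', 1 ≤ L' ∧ L' ≤ L ∧ (extSeq Blift L r k L').Monic ∧
      (∀ j, L' < j → j ≤ L → ¬(extSeq Blift L r k j).Monic) ∧
      L + (dy + D) - r - L' = (Γ 0).natDegree ∧
      ∀ i ≤ (Γ 0).natDegree, extSeq Blift L r k (L + (dy + D) - r - i) = A i := by
  have hf i : f i ∈ J := hJ ▸ Ideal.subset_span (Or.inl ⟨i, rfl⟩)
  have hXk : C (X ^ k) ∈ J := hJ ▸ Ideal.subset_span (Or.inr rfl)
  have hermite := hA.isHermiteSeq hΓ
  have hA0 := hermite.ne_zero_of_C_X_pow_mem hXk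
  obtain ⟨piv, hB⟩ := hHow.exists_isHowellLift hlift
  have hmem v (hv : InColSpanMod (X ^ k) Blift v) : invPi v ∈ J :=
    invPi_mem_of_inColSpanMod_sylvester hf hXk hdy (hHow.inColSpanMod_iff.mp hv)
  have hspan i (hi : i ≤ (Γ 0).natDegree) :
      ∃ v, InColSpanMod (X ^ k) Blift v ∧ invPi v = A i := by
    obtain ⟨w, w₀, hw, hw₀, hAi⟩ := hDelta i (hA.last_natDegree_le (hA0 i)) hi
    obtain ⟨v, hv, hvA⟩ := exists_inColSpanMod_sylvester hdy hw hw₀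
    exact ⟨v, hHow.inColSpanMod_iff.mpr hv, hvA.trans hAi.symm⟩
  have hlt : (Γ 0).natDegree < dy + D := by
    obtain ⟨v, -, hv⟩ := hspan _ le_rfl
    rw [hA.2.1 0] at hv
    exact hv ▸ natDegree_invPi_lt (hv ▸ hΓ.ne_zero 0)
  have hmonicN : (A (Γ 0).natDegree).Monic := by rw [hA.2.1 0]; exact hΓ.monic_zero hmonic
  have hmin i (hi : i < (Γ 0).natDegree) (hAi : (A i).Monic) : False :=
    ((hΓ.lmon_zero_monDvd_of_monic (hermite.mem i) hAi).1.trans_eq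
      (hermite.natDegree_eq (hA0 i))).not_gt hi
  exact hB.exists_extSeq_monic hk hermite
    (fun _ => hB.invPi_completedCol_eq hermite hA0 hmem hspan) hlt hmonicN hmin
    hL.1 hL.2 ⟨hr.1, hr.2.1⟩ hr.2.2

/-- let `f_1, …, f_t ∈ K[x,y]` (`t ≥ 2`), of `y`-degree at most `d_y`,
generate a zero-dimensional ideal, let `k ≥ 1`, `D ≥ max(1, Δ(f_1,…,f_t,x^k))`, let
`B` be the Howell normal form of `S mod x^k` (with `S` the extended Sylvester matrix of
`(f_1,…,f_t)` in degree `D`), `B_lift` its canonical lift, `h_1, …, h_L` the nonzero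
columns of `B_lift`, `r` the (1-based) pivot row index of `h_L`, `L'' = L + d_y + D - r`,
and `h_{L+1}, …, h_{L''}` the extra columns with entry `x^k` at index `r + i - L`. Then
there is a largest `L' ≤ L` with `π⁻¹(h_{L'})` monic in `y`, and
`π⁻¹(h_{L''}), …, π⁻¹(h_{L'})` is the detaching basis `(A_0, …, A_{ν_0})` of
`J = ⟨f_1, …, f_t, x^k⟩` in degree `ν_0` (the largest `y`-degree of its reduced minimal
lexicographic Gröbner basis). -/
theorem howell_detaching {K : Type*} [Field K] {t σ : ℕ} (ht : 2 ≤ t)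
    (f : Fin t → Biv K) (dy D k L r : ℕ)
    (hk : 1 ≤ k) (hD : 1 ≤ D)
    (hdy : ∀ i, (f i).natDegree ≤ dy)
    (hdim : FiniteDimensional K (Biv K ⧸ Ideal.span (Set.range f)))
    (J : Ideal (Biv K))
    (hJ : J = Ideal.span
      (Set.range f ∪ {Polynomial.C ((Polynomial.X : Polynomial K) ^ k)}))
    (Γ : Fin (σ + 1) → Biv K) (hΓ : IsReducedGB Γ J)
    (A : ℕ → Biv K) (hA : IsDetachingSeq Γ J A)
    (hDelta : ∀ i, (Γ (Fin.last σ)).natDegree ≤ i → i ≤ (Γ 0).natDegree →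
      ∃ (w : Fin t → Biv K) (w0 : Biv K),
        (∀ j, (w j).degree < (D : WithBot ℕ)) ∧ w0.degree < (D : WithBot ℕ) ∧
        A i = (∑ j, w j * f j) +
          w0 * Polynomial.C ((Polynomial.X : Polynomial K) ^ k))
    (Blift : Matrix (Fin (dy + D)) (Fin (t * D)) (Polynomial K))
    (hlift : ∀ rr c, (Blift rr c).degree < (k : WithBot ℕ))
    (hHow : IsHowellForm k
      ((sylvester f dy D).map
        (Ideal.Quotient.mk (Ideal.span {(Polynomial.X : Polynomial K) ^ k})))
      (Blift.map
        (Ideal.Quotient.mk (Ideal.span {(Polynomial.X : Polynomial K) ^ k}))))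
    (hL : L ≤ t * D ∧ ∀ c : Fin (t * D), colNZ Blift c ↔ (c : ℕ) < L)
    (hr : 1 ≤ r ∧ r ≤ dy + D ∧
      ∀ c : Fin (t * D), (c : ℕ) + 1 = L →
        (∀ rr : Fin (dy + D), (rr : ℕ) + 1 < r → Blift rr c = 0) ∧
        (∀ rr : Fin (dy + D), (rr : ℕ) + 1 = r → Blift rr c ≠ 0)) :
    ∃ L', 1 ≤ L' ∧ L' ≤ L ∧
      (extSeq Blift L r k L').Monic ∧
      (∀ j, L' < j → j ≤ L → ¬ (extSeq Blift L r k j).Monic) ∧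
      (L + (dy + D) - r) - L' = (Γ 0).natDegree ∧
      (∀ i ≤ (Γ 0).natDegree,
        extSeq Blift L r k ((L + (dy + D) - r) - i) = A i) := by
  obtain ⟨p, hp, hmonic⟩ := exists_monic_mem_of_finite (I := Ideal.span (Set.range f))
  exact howell_detaching_general f dy D k L r hk hdy J hJ
    ⟨p, hJ ▸ Ideal.span_mono Set.subset_union_left hp, hmonic⟩ Γ hΓ A hA
    hDelta Blift hlift hHow hL hr
end
end

section
/- Let K be an algebraically closed field and F = (f_1,…,f_t) in K[x,y] of total degrees at most d ≥ 1, such that the common zero set V(F) ⊆ K² is finite. Then there exists a nonzero polynomial Y_2 in four variables over K, of total degree at most d⁴, such that for every γ = (γ_{1,1}, γ_{1,2}, γ_{2,1}, γ_{2,2}) ∈ K⁴ with Y_2(γ) ≠ 0 and with the 2×2 matrix [γ_{i,j}] invertible, the projection onto the first coordinate, (α,β) ↦ α, is injective on V(f_1^γ,…,f_t^γ). -/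
noncomputable section

open Polynomial

/-- The total degree of a bivariate polynomial `f ∈ k[x][y]`. -/
def totDeg {k : Type*} [CommRing k] (f : Biv k) : ℕ :=
  f.support.sup fun j => j + (f.coeff j).natDegree

/-- The linear change of coordinates
`f^γ(x,y) = f(γ₁₁ x + γ₂₁ y, γ₁₂ x + γ₂₂ y)`, where
`γ = (γ₁₁, γ₁₂, γ₂₁, γ₂₂) = (γ 0, γ 1, γ 2, γ 3)`. -/
def transform {k : Type*} [CommRing k] (γ : Fin 4 → k) (f : Biv k) : Biv k :=
  Polynomial.eval₂
    (Polynomial.eval₂RingHom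
      ((Polynomial.C : Polynomial k →+* Biv k).comp (Polynomial.C : k →+* Polynomial k))
      (Polynomial.C (Polynomial.C (γ 0)) * Polynomial.C Polynomial.X +
        Polynomial.C (Polynomial.C (γ 2)) * Polynomial.X))
    (Polynomial.C (Polynomial.C (γ 1)) * Polynomial.C Polynomial.X +
      Polynomial.C (Polynomial.C (γ 3)) * Polynomial.X)
    f

/-- Evaluation of `f ∈ k[x][y]` at the point `(a, b) ∈ k²` (`a` is the value of `x`,
`b` the value of `y`). -/
def bEval {k : Type*} [CommRing k] (a b : k) (f : Biv k) : k :=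
  Polynomial.eval b (f.map (Polynomial.evalRingHom a))

/-! Bézout's bound for finitely many common zeros in the plane, by counting dimensions. If `g` and
`h` are relatively prime of degrees `a` and `b`, the multiples of `g` and of `h` of degree at most
`m + a + b` meet exactly in the multiples of `g * h`, so their sum has codimension `a * b`
among all polynomials of that degree. For large `m` the polynomials vanishing on a set of `n` common
zeros have codimension `n`, hence `n ≤ a * b`.

If `V(F)` is finite, then no nonconstant polynomial divides all of `F`, since plane curves over an
algebraically closed field are infinite. A general linear combination of `F` is therefore relatively
prime to a given nonzero member of `F`, and `V(F)` has at most `d ^ 2` points.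

Finally, two zeros of `F^γ` in the same column are mapped by `γ` to two points of `V(F)` whose
difference is parallel to `(γ₂₁, γ₂₂)`. Each ordered pair of distinct points of `V(F)` excludes one
such direction, hence one linear form in `γ`, and the factor `γ₂₂` prevents `γ` from collapsing a
column to a point. -/

section DimensionCount

open Finset in
theorem ncard_finsupp_sum_le (σ : Type*) [Fintype σ] (m : ℕ) :
    {n : σ →₀ ℕ | (n.sum fun _ e ↦ e) ≤ m}.ncard =
      (m + Fintype.card σ).choose (Fintype.card σ) := by
  classical
  have monomials_eq : {n : σ →₀ ℕ | (n.sum fun _ e ↦ e) ≤ m} =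
      ((range (m + 1)).biUnion fun k ↦ univ.finsuppAntidiag k : Finset (σ →₀ ℕ)) := by
    ext n
    simp [Finsupp.sum_fintype]
  have degree_disjoint : (range (m + 1) : Set ℕ).PairwiseDisjoint
      fun k ↦ (univ : Finset σ).finsuppAntidiag k :=
    fun k _ l _ hkl ↦ disjoint_left.2 fun n hk hl ↦
      hkl ((mem_finsuppAntidiag.1 hk).1.symm.trans (mem_finsuppAntidiag.1 hl).1)
  rw [monomials_eq, Set.ncard_coe_finset, card_biUnion degree_disjoint]
  simp only [card_finsuppAntidiag_nat_eq_multichoose, card_univ, Nat.sum_range_multichoose]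

theorem finrank_restrictTotalDegree (R σ : Type*) [CommRing R] [Nontrivial R] [Fintype σ] (m : ℕ) :
    Module.finrank R (MvPolynomial.restrictTotalDegree σ R m) =
      (m + Fintype.card σ).choose (Fintype.card σ) :=
  (Module.finrank_eq_nat_card_basis (MvPolynomial.basisRestrictSupport R _)).trans <|
    (Nat.card_coe_set_eq _).trans (ncard_finsupp_sum_le σ m)

theorem exists_totalDegree_le_card_and_eval_ne_zero {R σ : Type*} [CommRing R] [IsDomain R]
    (S : Finset (σ → R)) {s : σ → R} (hs : s ∉ S) :
    ∃ p : MvPolynomial σ R, p.totalDegree ≤ S.card ∧ MvPolynomial.eval s p ≠ 0 ∧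
      ∀ t ∈ S, MvPolynomial.eval t p = 0 := by
  have exists_coord_ne (t : S) : ∃ i, s i ≠ t.1 i :=
    Function.ne_iff.1 (ne_of_mem_of_not_mem t.2 hs).symm
  choose i hi using exists_coord_ne
  refine ⟨∏ t : S, (MvPolynomial.X (i t) - MvPolynomial.C (t.1 (i t))), ?_, ?_, fun t ht ↦ ?_⟩
  · calc _ ≤ ∑ t : S, (MvPolynomial.X (i t) - MvPolynomial.C (t.1 (i t)) :
            MvPolynomial σ R).totalDegree :=
          MvPolynomial.totalDegree_finsetProd _ _
      _ ≤ ∑ _t : S, 1 := Finset.sum_le_sum fun t _ ↦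
          (MvPolynomial.totalDegree_sub_C_le _ _).trans (MvPolynomial.totalDegree_X _).le
      _ = S.card := by simp
  · simpa [Finset.prod_ne_zero_iff, sub_eq_zero] using hi
  · rw [map_prod]
    exact Finset.prod_eq_zero (Finset.mem_univ ⟨t, ht⟩) (by simp)

theorem exists_totalDegree_le_and_eval_eq {K σ : Type*} [Field K] (S : Finset (σ → K)) {m : ℕ}
    (hm : S.card ≤ m + 1) (v : S → K) :
    ∃ p : MvPolynomial σ K, p.totalDegree ≤ m ∧ ∀ s : S, MvPolynomial.eval s.1 p = v s := by
  classical
  choose p hdeg hne hzero using fun s : S ↦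
    exists_totalDegree_le_card_and_eval_ne_zero (S.erase s) (Finset.notMem_erase s.1 S)
  refine ⟨∑ s, (v s / MvPolynomial.eval s.1 (p s)) • p s, ?_, fun s ↦ ?_⟩
  · refine MvPolynomial.totalDegree_finsetSum_le fun s _ ↦
      (MvPolynomial.totalDegree_smul_le _ _).trans ((hdeg s).trans ?_)
    rw [Finset.card_erase_of_mem s.2]
    omega
  · rw [map_sum, Finset.sum_eq_single_of_mem s (Finset.mem_univ s)]
    · simp [MvPolynomial.smul_eval, div_mul_cancel₀ _ (hne s)]
    · intro t _ hts
      have hst : s.1 ∈ S.erase t.1 := Finset.mem_erase.2 ⟨Subtype.coe_ne_coe.2 hts.symm, s.2⟩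
      simp [MvPolynomial.smul_eval, hzero t s.1 hst]

theorem card_add_finrank_inf_vanishingIdeal {K σ : Type*} [Field K] [Finite σ]
    (S : Finset (σ → K)) {m : ℕ} (hm : S.card ≤ m + 1) :
    S.card + Module.finrank K ↥(MvPolynomial.restrictTotalDegree σ K m ⊓
        (MvPolynomial.vanishingIdeal K (S : Set (σ → K))).restrictScalars K) =
      Module.finrank K (MvPolynomial.restrictTotalDegree σ K m) := by
  let P := MvPolynomial.restrictTotalDegree σ K m
  let evalOn : MvPolynomial σ K →ₗ[K] (S → K) :=
    LinearMap.pi fun s ↦ (MvPolynomial.aeval s.1).toLinearMap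
  have ker_evalOn : LinearMap.ker evalOn =
      (MvPolynomial.vanishingIdeal K (S : Set (σ → K))).restrictScalars K := by
    ext p
    simp [evalOn, funext_iff]
  have range_evalOn : LinearMap.range (evalOn.domRestrict P) = ⊤ := by
    refine LinearMap.range_eq_top.2 fun v ↦ ?_
    obtain ⟨p, hdeg, hp⟩ := exists_totalDegree_le_and_eval_eq S hm v
    exact ⟨⟨p, (MvPolynomial.mem_restrictTotalDegree _ _ _).2 hdeg⟩,
      funext fun s ↦ by simpa [evalOn] using hp s⟩
  have rank_nullity := LinearMap.finrank_range_add_finrank_ker (evalOn.domRestrict P)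
  rwa [range_evalOn, finrank_top, Module.finrank_fintype_fun_eq_card, Fintype.card_coe,
    LinearMap.ker_domRestrict, ← Submodule.finrank_map_subtype_eq, Submodule.map_comap_subtype,
    ker_evalOn] at rank_nullity

end DimensionCount

section Bezout

variable {K σ : Type*} [Field K]

/-- The space of multiples `g * p` with `p` of total degree at most `m`. The bound is on the
cofactor `p`, so that the space is isomorphic to that of all polynomials of degree at most `m`. -/
def multiplesByDegreeLE (g : MvPolynomial σ K) (m : ℕ) : Submodule K (MvPolynomial σ K) :=
  (MvPolynomial.restrictTotalDegree σ K m).map (LinearMap.mulLeft K g)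

theorem finrank_multiplesByDegreeLE {g : MvPolynomial σ K} (hg : g ≠ 0) (m : ℕ) :
    Module.finrank K (multiplesByDegreeLE g m) =
      Module.finrank K (MvPolynomial.restrictTotalDegree σ K m) :=
  (Submodule.equivMapOfInjective _ (mul_right_injective₀ hg) _).finrank_eq.symm

instance finite_multiplesByDegreeLE [Finite σ] (g : MvPolynomial σ K) (m : ℕ) :
    Module.Finite K (multiplesByDegreeLE g m) :=
  inferInstanceAs (Module.Finite K ((MvPolynomial.restrictTotalDegree σ K m).map _))

theorem multiplesByDegreeLE_le {g : MvPolynomial σ K} {m n : ℕ} (hn : g.totalDegree + m ≤ n)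
    {I : Ideal (MvPolynomial σ K)} (hg : g ∈ I) :
    multiplesByDegreeLE g m ≤
      MvPolynomial.restrictTotalDegree σ K n ⊓ I.restrictScalars K := by
  rintro _ ⟨p, hp, rfl⟩
  have hdeg : p.totalDegree ≤ m := (MvPolynomial.mem_restrictTotalDegree _ _ _).1 hp
  refine ⟨(MvPolynomial.mem_restrictTotalDegree _ _ _).2 ?_, I.mul_mem_right p hg⟩
  exact (MvPolynomial.totalDegree_mul g p).trans ((Nat.add_le_add_left hdeg _).trans hn)

theorem multiplesByDegreeLE_inf_le {g h : MvPolynomial σ K} (hh : h ≠ 0) (hgh : IsRelPrime g h)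
    (m n : ℕ) :
    multiplesByDegreeLE g (m + h.totalDegree) ⊓ multiplesByDegreeLE h n ≤
      multiplesByDegreeLE (g * h) m := by
  rintro _ ⟨⟨p, hp, rfl⟩, ⟨q, -, hpq⟩⟩
  have hdeg : p.totalDegree ≤ m + h.totalDegree := (MvPolynomial.mem_restrictTotalDegree _ _ _).1 hp
  obtain ⟨c, rfl⟩ : h ∣ p := hgh.symm.dvd_of_dvd_mul_left ⟨q, hpq.symm⟩
  refine ⟨c, (MvPolynomial.mem_restrictTotalDegree _ _ _).2 ?_, mul_assoc g h c⟩
  rcases eq_or_ne c 0 with rfl | hc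
  · simp
  · rw [MvPolynomial.totalDegree_mul_of_isDomain hh hc] at hdeg
    omega

theorem choose_two_add_choose_two (m a b : ℕ) :
    (m + a + b + 2).choose 2 + (m + 2).choose 2 =
      (m + a + 2).choose 2 + (m + b + 2).choose 2 + a * b := by
  induction b with
  | zero => simp
  | succ b ih =>
    have choose_succ (k : ℕ) : (k + 1).choose 2 = k + k.choose 2 := by
      rw [Nat.choose_succ_succ', Nat.choose_one_right]
    have hab := choose_succ (m + a + b + 2)
    have hb := choose_succ (m + b + 2)
    rw [mul_add_one]
    grind

theorem card_le_totalDegree_mul_totalDegree_of_ne_zero {g h : MvPolynomial (Fin 2) K}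
    (hg : g ≠ 0) (hh : h ≠ 0) (hgh : IsRelPrime g h) {S : Finset (Fin 2 → K)}
    (hSg : g ∈ MvPolynomial.vanishingIdeal K (S : Set (Fin 2 → K)))
    (hSh : h ∈ MvPolynomial.vanishingIdeal K (S : Set (Fin 2 → K))) :
    S.card ≤ g.totalDegree * h.totalDegree := by
  set m := S.card
  set a := g.totalDegree
  set b := h.totalDegree
  let G := multiplesByDegreeLE g (m + b)
  let H := multiplesByDegreeLE h (m + a)
  have finrank_plane (n : ℕ) :
      Module.finrank K (MvPolynomial.restrictTotalDegree (Fin 2) K n) = (n + 2).choose 2 :=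
    finrank_restrictTotalDegree K (Fin 2) n
  have finrank_G : Module.finrank K G = (m + b + 2).choose 2 :=
    (finrank_multiplesByDegreeLE hg _).trans (finrank_plane _)
  have finrank_H : Module.finrank K H = (m + a + 2).choose 2 :=
    (finrank_multiplesByDegreeLE hh _).trans (finrank_plane _)
  have finrank_inf_le : Module.finrank K ↥(G ⊓ H) ≤ (m + 2).choose 2 :=
    (Submodule.finrank_mono (multiplesByDegreeLE_inf_le hh hgh m (m + a))).trans_eq <|
      (finrank_multiplesByDegreeLE (mul_ne_zero hg hh) m).trans (finrank_plane m)
  have card_add_finrank_sup_le : m + Module.finrank K ↥(G ⊔ H) ≤ (m + a + b + 2).choose 2 := by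
    rw [← finrank_plane, ← card_add_finrank_inf_vanishingIdeal S (m := m + a + b) (by omega)]
    exact Nat.add_le_add_left (Submodule.finrank_mono <| sup_le
      (multiplesByDegreeLE_le (by omega) hSg) (multiplesByDegreeLE_le (by omega) hSh)) m
  have finrank_sup_add_inf := Submodule.finrank_sup_add_finrank_inf_eq G H
  have codim_eq := choose_two_add_choose_two m a b
  omega

theorem eq_empty_of_isUnit_mem_vanishingIdeal {p : MvPolynomial σ K} (hp : IsUnit p)
    {S : Set (σ → K)} (hS : p ∈ MvPolynomial.vanishingIdeal K S) : S = ∅ :=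
  Set.eq_empty_of_forall_notMem fun s hs ↦
    (hp.map (MvPolynomial.aeval s)).ne_zero (hS s hs)

theorem card_le_totalDegree_mul_totalDegree {g h : MvPolynomial (Fin 2) K}
    (hgh : IsRelPrime g h) {S : Finset (Fin 2 → K)}
    (hSg : g ∈ MvPolynomial.vanishingIdeal K (S : Set (Fin 2 → K)))
    (hSh : h ∈ MvPolynomial.vanishingIdeal K (S : Set (Fin 2 → K))) :
    S.card ≤ g.totalDegree * h.totalDegree := by
  rcases eq_or_ne g 0 with rfl | hg
  · simp [Finset.coe_eq_empty.1 <|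
      eq_empty_of_isUnit_mem_vanishingIdeal (isRelPrime_zero_left.1 hgh) hSh]
  rcases eq_or_ne h 0 with rfl | hh
  · simp [Finset.coe_eq_empty.1 <|
      eq_empty_of_isUnit_mem_vanishingIdeal (isRelPrime_zero_right.1 hgh) hSg]
  exact card_le_totalDegree_mul_totalDegree_of_ne_zero hg hh hgh hSg hSh

end Bezout

section CommonZeros

theorem totalDegree_eq_zero_of_forall_degreeOf_eq_zero {R σ : Type*} [CommSemiring R]
    {p : MvPolynomial σ R} (hp : ∀ i, p.degreeOf i = 0) : p.totalDegree = 0 := by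
  refine (MvPolynomial.totalDegree_eq_zero_iff _ p).2 fun n hn i ↦ ?_
  exact Nat.le_zero.1 (hp i ▸ MvPolynomial.monomial_le_degreeOf i hn)

theorem degreeOf_eq_zero_of_finite_zeros {K σ : Type*} [Field K] [IsAlgClosed K] [Finite σ]
    [Nontrivial σ] {p : MvPolynomial σ K} (hp : p ≠ 0)
    (hfin : {s : σ → K | MvPolynomial.eval s p = 0}.Finite) (j : σ) : p.degreeOf j = 0 := by
  obtain ⟨i, hij⟩ := exists_ne j
  -- `q` involves only `X i`, and by the Nullstellensatz `p` divides a power of it.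
  let q : MvPolynomial σ K :=
    ∏ s ∈ hfin.toFinset, (MvPolynomial.X i - MvPolynomial.C (s i))
  have factor_ne_zero (c : K) : (MvPolynomial.X i - MvPolynomial.C c : MvPolynomial σ K) ≠ 0 := by
    intro h
    simpa using congrArg (MvPolynomial.eval fun _ ↦ c + 1) h
  have hq : q ≠ 0 := Finset.prod_ne_zero_iff.2 fun s _ ↦ factor_ne_zero (s i)
  have degreeOf_q : q.degreeOf j = 0 := by
    rw [MvPolynomial.degreeOf_prod_eq _ _ fun s _ ↦ factor_ne_zero (s i)]
    refine Finset.sum_eq_zero fun s _ ↦ Nat.le_zero.1 <|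
      (MvPolynomial.degreeOf_sub_le _ _ _).trans ?_
    simp [MvPolynomial.degreeOf_X_of_ne hij.symm, MvPolynomial.degreeOf_C]
  have q_mem_radical : q ∈ (Ideal.span {p}).radical := by
    rw [← MvPolynomial.vanishingIdeal_zeroLocus_eq_radical (K := K), MvPolynomial.zeroLocus_span]
    intro s hs
    rw [map_prod]
    exact Finset.prod_eq_zero (i := s) (by simpa using hs) (by simp)
  obtain ⟨n, hn⟩ := q_mem_radical
  obtain ⟨r, hr⟩ := Ideal.mem_span_singleton.1 hn
  have hr0 : r ≠ 0 := right_ne_zero_of_mul (hr ▸ pow_ne_zero n hq)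
  have degreeOf_add : p.degreeOf j + r.degreeOf j = 0 := by
    rw [← MvPolynomial.degreeOf_mul_eq hp hr0, ← hr, MvPolynomial.degreeOf_pow_eq _ _ _ hq,
      degreeOf_q, mul_zero]
  exact (Nat.add_eq_zero_iff.1 degreeOf_add).1

theorem infinite_zeros_of_not_isUnit {K σ : Type*} [Field K] [IsAlgClosed K] [Finite σ]
    [Nontrivial σ] {p : MvPolynomial σ K} (hp : ¬IsUnit p) :
    {s : σ → K | MvPolynomial.eval s p = 0}.Infinite := by
  have : Infinite K := IsAlgClosed.instInfinite
  intro hfin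
  rcases eq_or_ne p 0 with rfl | hp0
  · exact Set.infinite_univ (by simpa using hfin)
  have hC := MvPolynomial.totalDegree_eq_zero_iff_eq_C.1 <|
    totalDegree_eq_zero_of_forall_degreeOf_eq_zero (degreeOf_eq_zero_of_finite_zeros hp0 hfin)
  have hcoeff : p.coeff 0 ≠ 0 := fun h ↦ hp0 (by rw [hC, h, map_zero])
  exact hp (hC ▸ hcoeff.isUnit.map MvPolynomial.C)

theorem exists_mem_submodule_isRelPrime {K A : Type*} [Field K] [Infinite K] [CommRing A]
    [IsDomain A] [UniqueFactorizationMonoid A] [Algebra K A] (W : Submodule K A) {g : A}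
    (hg : g ≠ 0) (hW : ∀ p, Prime p → p ∣ g → ∃ w ∈ W, ¬p ∣ w) : ∃ w ∈ W, IsRelPrime g w := by
  classical
  let divisible (p : A) : Submodule K W := ((Ideal.span {p}).restrictScalars K).comap W.subtype
  have mem_divisible (p : A) (w : W) : w ∈ divisible p ↔ p ∣ w := by
    simp [divisible, Ideal.mem_span_singleton]
  let factors := (UniqueFactorizationMonoid.factors g).toFinset
  have divisible_proper : ⊤ ∉ factors.image divisible := by
    intro htop
    obtain ⟨p, hp, hp_top⟩ := Finset.mem_image.1 htop
    rw [Multiset.mem_toFinset] at hp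
    obtain ⟨w, hwW, hpw⟩ := hW p (UniqueFactorizationMonoid.prime_of_factor p hp)
      (UniqueFactorizationMonoid.dvd_of_mem_factors hp)
    exact hpw ((mem_divisible p ⟨w, hwW⟩).1 (hp_top ▸ Submodule.mem_top))
  obtain ⟨w, hw⟩ := (Set.ne_univ_iff_exists_notMem _).1
    (Subspace.biUnion_ne_univ_of_top_notMem divisible_proper)
  refine ⟨w, w.2, (UniqueFactorizationMonoid.isRelPrime_iff_no_prime_factors hg).2 ?_⟩
  intro p hpg hpw hp
  obtain ⟨q, hq, hpq⟩ := UniqueFactorizationMonoid.exists_mem_factors_of_dvd hg hp.irreducible hpg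
  exact hw <| Set.mem_biUnion (Finset.mem_image_of_mem divisible (Multiset.mem_toFinset.2 hq))
    ((mem_divisible q w).2 (hpq.symm.dvd.trans hpw))

theorem ncard_commonZeros_le_sq {K ι : Type*} [Field K] [IsAlgClosed K]
    (f : ι → MvPolynomial (Fin 2) K) {d : ℕ} (hdeg : ∀ i, (f i).totalDegree ≤ d)
    (hfin : {s | ∀ i, MvPolynomial.eval s (f i) = 0}.Finite) :
    {s | ∀ i, MvPolynomial.eval s (f i) = 0}.ncard ≤ d ^ 2 := by
  have : Infinite K := IsAlgClosed.instInfinite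
  set V := {s | ∀ i, MvPolynomial.eval s (f i) = 0}
  have exists_not_dvd {p : MvPolynomial (Fin 2) K} (hp : ¬IsUnit p) : ∃ i, ¬p ∣ f i := by
    by_contra! hdvd
    refine infinite_zeros_of_not_isUnit hp (hfin.subset fun s hs i ↦ ?_)
    exact zero_dvd_iff.1 ((show MvPolynomial.eval s p = 0 from hs) ▸ map_dvd _ (hdvd i))
  obtain ⟨i, hi⟩ := exists_not_dvd not_isUnit_zero
  obtain ⟨h, hspan, hrel⟩ := exists_mem_submodule_isRelPrime (Submodule.span K (Set.range f))
    (mt zero_dvd_iff.2 hi) fun p hp _ ↦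
      let ⟨j, hj⟩ := exists_not_dvd hp.not_isUnit
      ⟨f j, Submodule.subset_span ⟨j, rfl⟩, hj⟩
  have f_mem_vanishing (j : ι) : f j ∈ MvPolynomial.vanishingIdeal K V :=
    fun s hs ↦ by simpa using hs j
  have h_mem_vanishing : h ∈ MvPolynomial.vanishingIdeal K V :=
    Ideal.span_le.2 (Set.range_subset_iff.2 f_mem_vanishing)
      (Submodule.span_subset_span K _ _ hspan)
  have h_mem_degree : h ∈ MvPolynomial.restrictTotalDegree (Fin 2) K d :=
    Submodule.span_le.2 (Set.range_subset_iff.2 fun j ↦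
      (MvPolynomial.mem_restrictTotalDegree _ _ _).2 (hdeg j)) hspan
  calc V.ncard = hfin.toFinset.card := Set.ncard_eq_toFinset_card V hfin
    _ ≤ (f i).totalDegree * h.totalDegree := card_le_totalDegree_mul_totalDegree hrel
        (by simpa only [hfin.coe_toFinset] using f_mem_vanishing i)
        (by simpa only [hfin.coe_toFinset] using h_mem_vanishing)
    _ ≤ d * d := Nat.mul_le_mul (hdeg i)
        ((MvPolynomial.mem_restrictTotalDegree _ _ _).1 h_mem_degree)
    _ = d ^ 2 := (sq d).symm

end CommonZeros

section Bivariate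

open Bivariate

theorem eval_equivMvPolynomial {R : Type*} [CommRing R] (s : Fin 2 → R) (f : Biv R) :
    MvPolynomial.eval s (equivMvPolynomial R f) = bEval (s 0) (s 1) f := by
  have hom_eq : (MvPolynomial.eval s).comp (equivMvPolynomial R : Biv R →+* _) =
      (evalRingHom (s 1)).comp (mapRingHom (evalRingHom (s 0))) := by
    ext <;> simp
  exact RingHom.congr_fun hom_eq f

theorem bEval_transform {R : Type*} [CommRing R] (γ : Fin 4 → R) (a b : R) (f : Biv R) :
    bEval a b (transform γ f) = bEval (γ 0 * a + γ 2 * b) (γ 1 * a + γ 3 * b) f := by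
  rw [bEval, map_evalRingHom_eval, transform, ← coe_evalEvalRingHom, hom_eval₂, bEval, eval_map]
  congr 1
  · ext <;> simp
  · simp

theorem totalDegree_equivMvPolynomial_le {R : Type*} [CommRing R] (f : Biv R) :
    (equivMvPolynomial R f).totalDegree ≤ totDeg f := by
  have expansion : equivMvPolynomial R f = ∑ j ∈ f.support, ∑ i ∈ (f.coeff j).support,
      MvPolynomial.C ((f.coeff j).coeff i) * MvPolynomial.X 0 ^ i * MvPolynomial.X 1 ^ j := by
    have hom_eq : (equivMvPolynomial R : Biv R →+* MvPolynomial (Fin 2) R) =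
        eval₂RingHom (eval₂RingHom MvPolynomial.C (MvPolynomial.X 0)) (MvPolynomial.X 1) := by
      ext <;> simp
    simpa [eval₂_eq_sum, sum_def, Finset.sum_mul] using RingHom.congr_fun hom_eq f
  rw [expansion]
  refine MvPolynomial.totalDegree_finsetSum_le fun j hj ↦
    MvPolynomial.totalDegree_finsetSum_le fun i hi ↦ ?_
  calc _ ≤ i + j := ((MvPolynomial.isHomogeneous_C_mul_X_pow _ _ _).mul
        (MvPolynomial.isHomogeneous_X_pow _ _)).totalDegree_le
    _ ≤ j + (f.coeff j).natDegree := by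
        rw [add_comm]
        exact Nat.add_le_add_left (le_natDegree_of_mem_supp i hi) j
    _ ≤ totDeg f := Finset.le_sup (f := fun j ↦ j + (f.coeff j).natDegree) hj

theorem ncard_bEval_zeros_le_sq {K ι : Type*} [Field K] [IsAlgClosed K] (f : ι → Biv K) {d : ℕ}
    (htot : ∀ i, totDeg (f i) ≤ d)
    (hfin : {p : K × K | ∀ i, bEval p.1 p.2 (f i) = 0}.Finite) :
    {p : K × K | ∀ i, bEval p.1 p.2 (f i) = 0}.ncard ≤ d ^ 2 := by
  have preimage_eq : finTwoArrowEquiv K ⁻¹' {p : K × K | ∀ i, bEval p.1 p.2 (f i) = 0} =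
      {s | ∀ i, MvPolynomial.eval s (equivMvPolynomial K (f i)) = 0} := by
    ext s
    simp [eval_equivMvPolynomial]
  rw [← Set.ncard_preimage_of_injective_subset_range (finTwoArrowEquiv K).injective
      ((finTwoArrowEquiv K).range_eq_univ ▸ Set.subset_univ _),
    preimage_eq]
  refine ncard_commonZeros_le_sq _ (fun i ↦ (totalDegree_equivMvPolynomial_le _).trans (htot i)) ?_
  exact preimage_eq ▸ hfin.preimage (finTwoArrowEquiv K).injective.injOn

end Bivariate

section Separation

variable {R : Type*} [CommRing R]

/-- The linear form in `γ` that vanishes when `p - q` is parallel to `(γ₂₁, γ₂₂) = (γ 2, γ 3)`, the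
image under `γ` of the vertical direction. -/
def parallelForm (p q : R × R) : MvPolynomial (Fin 4) R :=
  MvPolynomial.C (p.1 - q.1) * MvPolynomial.X 3 - MvPolynomial.C (p.2 - q.2) * MvPolynomial.X 2

/-- A polynomial whose nonvanishing at `γ` ensures that `γ` maps at most one point of each column
into `S`: the product of `γ₂₂ = γ 3` and the forms `parallelForm p q` over all ordered pairs of
distinct points `p, q` of `S`. -/
def separatingPolynomial (S : Finset (R × R)) : MvPolynomial (Fin 4) R :=
  MvPolynomial.X 3 * ∏ q ∈ S.offDiag, parallelForm q.1 q.2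

theorem parallelForm_ne_zero {p q : R × R} (hpq : p ≠ q) : parallelForm p q ≠ 0 := by
  intro h
  have hfst : p.1 - q.1 = 0 := by
    simpa [parallelForm] using congrArg (MvPolynomial.eval ![0, 0, 0, 1]) h
  have hsnd : p.2 - q.2 = 0 := by
    simpa [parallelForm, sub_eq_zero, eq_comm] using
      congrArg (MvPolynomial.eval ![0, 0, 1, 0]) h
  exact hpq (Prod.ext (sub_eq_zero.1 hfst) (sub_eq_zero.1 hsnd))

theorem totalDegree_parallelForm_le (p q : R × R) : (parallelForm p q).totalDegree ≤ 1 :=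
  ((MvPolynomial.isHomogeneous_C_mul_X _ _).sub
    (MvPolynomial.isHomogeneous_C_mul_X _ _)).totalDegree_le

variable [IsDomain R]

theorem separatingPolynomial_ne_zero (S : Finset (R × R)) : separatingPolynomial S ≠ 0 :=
  mul_ne_zero (MvPolynomial.X_ne_zero 3) <| Finset.prod_ne_zero_iff.2 fun _ hq ↦
    parallelForm_ne_zero (Finset.mem_offDiag.1 hq).2.2

theorem totalDegree_separatingPolynomial_le (S : Finset (R × R)) :
    (separatingPolynomial S).totalDegree ≤ 1 + S.offDiag.card := by
  refine (MvPolynomial.totalDegree_mul _ _).trans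
    (add_le_add (MvPolynomial.totalDegree_X 3).le ?_)
  calc _ ≤ ∑ q ∈ S.offDiag, (parallelForm q.1 q.2).totalDegree :=
        MvPolynomial.totalDegree_finsetProd _ _
    _ ≤ ∑ _q ∈ S.offDiag, 1 := Finset.sum_le_sum fun _ _ ↦ totalDegree_parallelForm_le _ _
    _ = S.offDiag.card := (Finset.card_eq_sum_ones _).symm

theorem injOn_fst_of_eval_separatingPolynomial_ne_zero {S : Finset (R × R)} {γ : Fin 4 → R}
    (hγ : MvPolynomial.eval γ (separatingPolynomial S) ≠ 0) :
    Set.InjOn Prod.fst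
      {p : R × R | (γ 0 * p.1 + γ 2 * p.2, γ 1 * p.1 + γ 3 * p.2) ∈ S} := by
  rintro ⟨a, b⟩ hp ⟨a', b'⟩ hq hab
  obtain rfl : a = a' := hab
  rw [Set.mem_ofPred_eq] at hp hq
  rw [separatingPolynomial, map_mul, map_prod, MvPolynomial.eval_X] at hγ
  by_contra hne
  have hb : b ≠ b' := fun h ↦ hne (Prod.ext rfl h)
  have image_ne : (γ 0 * a + γ 2 * b, γ 1 * a + γ 3 * b) ≠
      (γ 0 * a + γ 2 * b', γ 1 * a + γ 3 * b') := fun h ↦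
    hb (mul_left_cancel₀ (left_ne_zero_of_mul hγ) (add_left_cancel (congrArg Prod.snd h)))
  have hpair : (_, _) ∈ S.offDiag := Finset.mem_offDiag.2 ⟨hp, hq, image_ne⟩
  refine Finset.prod_ne_zero_iff.1 (right_ne_zero_of_mul hγ) _ hpair ?_
  simp only [parallelForm, map_sub, map_mul, MvPolynomial.eval_C, MvPolynomial.eval_X]
  ring

end Separation

theorem one_add_card_offDiag_le {α : Type*} {S : Finset α} {n : ℕ} (hn : 1 ≤ n)
    (hS : S.card ≤ n) : 1 + S.offDiag.card ≤ n ^ 2 := by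
  rcases S.eq_empty_or_nonempty with rfl | hne
  · simpa using Nat.one_le_pow 2 n hn
  · calc 1 + S.offDiag.card ≤ S.card + S.offDiag.card := Nat.add_le_add_right hne.card_pos _
      _ = S.card ^ 2 := by
        rw [Finset.offDiag_card, sq, Nat.add_sub_cancel' (Nat.le_mul_self _)]
      _ ≤ n ^ 2 := Nat.pow_le_pow_left hS 2

theorem avoid_hypersurface_shear_general {K ι : Type*} [Field K] [IsAlgClosed K]
    (f : ι → Biv K) (d : ℕ) (hd : 1 ≤ d) (htot : ∀ i, totDeg (f i) ≤ d)
    (hfin : {p : K × K | ∀ i, bEval p.1 p.2 (f i) = 0}.Finite) :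
    ∃ Y₂ : MvPolynomial (Fin 4) K, Y₂ ≠ 0 ∧ Y₂.totalDegree ≤ d ^ 4 ∧
      ∀ γ : Fin 4 → K, MvPolynomial.eval γ Y₂ ≠ 0 →
        Set.InjOn Prod.fst
          {p : K × K | ∀ i, bEval p.1 p.2 (transform γ (f i)) = 0} := by
  have card_le : hfin.toFinset.card ≤ d ^ 2 :=
    (Set.ncard_eq_toFinset_card _ hfin).symm.trans_le (ncard_bEval_zeros_le_sq f htot hfin)
  refine ⟨separatingPolynomial hfin.toFinset, separatingPolynomial_ne_zero _, ?_, fun γ hγ ↦ ?_⟩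
  · calc _ ≤ 1 + hfin.toFinset.offDiag.card := totalDegree_separatingPolynomial_le _
      _ ≤ (d ^ 2) ^ 2 := one_add_card_offDiag_le (Nat.one_le_pow _ _ hd) card_le
      _ = d ^ 4 := (pow_mul d 2 2).symm
  · simpa [bEval_transform] using injOn_fst_of_eval_separatingPolynomial_ne_zero hγ

/-- let `K` be algebraically closed and `F = (f_1, …, f_t)` in `K[x,y]`
of total degrees at most `d ≥ 1` with `V(F) ⊆ K²` finite. Then there is a nonzero
polynomial `Y₂` in four variables, of total degree at most `d⁴`, such that for every
`γ ∈ K⁴` with `Y₂(γ) ≠ 0` and the matrix `[γᵢⱼ]` invertible, the projection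
`(α, β) ↦ α` is injective on `V(f_1^γ, …, f_t^γ)`. -/
theorem avoid_hypersurface_shear {K : Type*} [Field K] [IsAlgClosed K] {t : ℕ}
    (f : Fin t → Biv K) (d : ℕ) (hd : 1 ≤ d)
    (htot : ∀ i, totDeg (f i) ≤ d)
    (hfin : {p : K × K | ∀ i, bEval p.1 p.2 (f i) = 0}.Finite) :
    ∃ Y₂ : MvPolynomial (Fin 4) K, Y₂ ≠ 0 ∧ Y₂.totalDegree ≤ d ^ 4 ∧
      ∀ γ : Fin 4 → K, MvPolynomial.eval γ Y₂ ≠ 0 →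
        γ 0 * γ 3 - γ 1 * γ 2 ≠ 0 →
        Set.InjOn Prod.fst
          {p : K × K | ∀ i, bEval p.1 p.2 (transform γ (f i)) = 0} :=
  let ⟨Y₂, hY₂, hdeg, hinj⟩ := avoid_hypersurface_shear_general f d hd htot hfin
  ⟨Y₂, hY₂, hdeg, fun γ hγ _ ↦ hinj γ hγ⟩
end
end
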